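/- arXiv:2004.12686 — 14 statements merged into one kernel-verified Lean document; each statement's English description precedes it below -/
import Mathlib

section
/- Let ψ be a nonzero eigenvector of H_search with eigenvalue E ∈ ℝ such that E ≠ r·λ_i for every i. Then γ := ⟨w, ψ⟩ ≠ 0, the coefficients b_i := ⟨v_i, ψ⟩ satisfy b_i = γ·a_i/(E − r·λ_i) for every i, and the secular equation Σ_{i=1}^{n} |a_i|²/(E − r·λ_i) = 1 holds. -/
open Matrix BigOperators

/-- Let `ψ` be a nonzero eigenvector of `H_search = r•H + |w⟩⟨w|` with real
eigenvalue `E` such that `E ≠ r·λ i` for every `i`. Then `γ = ⟨w, ψ⟩ ≠ 0`, the coefficients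
`b i = ⟨v i, ψ⟩` satisfy `b i = γ·a i/(E − r·λ i)`, and `∑ i, |a i|²/(E − r·λ i) = 1`. -/
theorem secular_equation_of_eigenvector
    (n : ℕ) (H : Matrix (Fin n) (Fin n) ℂ) (hH : H.IsHermitian)
    (v : Fin n → (Fin n → ℂ)) (lam : Fin n → ℝ) (hlam : Monotone lam)
    (hortho : ∀ i j, star (v i) ⬝ᵥ v j = if i = j then 1 else 0)
    (heig : ∀ i, H.mulVec (v i) = (lam i : ℂ) • v i)
    (w : Fin n → ℂ) (hw : star w ⬝ᵥ w = 1)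
    (a : Fin n → ℂ) (ha : ∀ i, a i = star (v i) ⬝ᵥ w)
    (r : ℝ)
    (Hs : Matrix (Fin n) (Fin n) ℂ)
    (hHs : Hs = (r : ℂ) • H + Matrix.vecMulVec w (star w))
    (ψ : Fin n → ℂ) (hψ : ψ ≠ 0)
    (E : ℝ) (heigψ : Hs.mulVec ψ = (E : ℂ) • ψ)
    (hE : ∀ i, E ≠ r * lam i) :
    star w ⬝ᵥ ψ ≠ 0 ∧
    (∀ i, star (v i) ⬝ᵥ ψ = (star w ⬝ᵥ ψ) * a i / ((E : ℂ) - (r : ℂ) * (lam i : ℂ))) ∧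
    ∑ i, ‖a i‖ ^ 2 / (E - r * lam i) = 1 := by
  have key : ∀ i, star (v i) ⬝ᵥ ψ * ((E : ℂ) - (r : ℂ) * (lam i : ℂ)) = (star w ⬝ᵥ ψ) * a i := by
    intro i
    have h1 : star (v i) ᵥ* H = (lam i : ℂ) • star (v i) := by
      have h2 := congrArg star (heig i)
      rw [Matrix.star_mulVec, hH.eq, star_smul] at h2
      simpa using h2
    have h3 := congrArg (fun x => star (v i) ⬝ᵥ x) heigψ
    simp only [hHs, Matrix.add_mulVec, Matrix.smul_mulVec, Matrix.vecMulVec_mulVec,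
      dotProduct_add, dotProduct_smul, Matrix.dotProduct_mulVec, h1, smul_dotProduct,
      smul_eq_mul, ← ha, MulOpposite.smul_eq_mul_unop, MulOpposite.unop_op] at h3
    linear_combination -h3
  have hne : ∀ i, (E : ℂ) - (r : ℂ) * (lam i : ℂ) ≠ 0 := by
    intro i h
    apply hE i
    have h' := sub_eq_zero.mp h
    exact_mod_cast h'
  have hb : ∀ i, star (v i) ⬝ᵥ ψ =
      (star w ⬝ᵥ ψ) * a i / ((E : ℂ) - (r : ℂ) * (lam i : ℂ)) := by
    intro i
    rw [eq_div_iff (hne i), key]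
  let U : Matrix (Fin n) (Fin n) ℂ := Matrix.of fun i => star (v i)
  have hU : U * Uᴴ = 1 := by
    ext i j
    rw [Matrix.one_apply, ← hortho i j]
    simp [U, Matrix.mul_apply, dotProduct]
  have hU' : Uᴴ * U = 1 := mul_eq_one_comm.mp hU
  have hUx : ∀ x i, (U *ᵥ x) i = star (v i) ⬝ᵥ x := fun x i => rfl
  have hpars : star w ⬝ᵥ ψ = ∑ i, star (a i) * (star (v i) ⬝ᵥ ψ) := by
    have h : star (U *ᵥ w) ⬝ᵥ (U *ᵥ ψ) = star w ⬝ᵥ ψ := by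
      rw [Matrix.star_mulVec, ← Matrix.dotProduct_mulVec, Matrix.mulVec_mulVec, hU',
        Matrix.one_mulVec]
    rw [← h]
    simp only [dotProduct, ha]
    rfl
  have hγ : star w ⬝ᵥ ψ ≠ 0 := by
    intro h0
    apply hψ
    have h : U *ᵥ ψ = 0 := by
      ext i
      rw [hUx, hb, h0]
      simp
    rw [← Matrix.one_mulVec ψ, ← hU', ← Matrix.mulVec_mulVec, h, Matrix.mulVec_zero]
  refine ⟨hγ, hb, ?_⟩
  have hs : (star w ⬝ᵥ ψ) * ((∑ i, ‖a i‖ ^ 2 / (E - r * lam i) : ℝ) : ℂ) = (star w ⬝ᵥ ψ) * 1 := by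
    rw [mul_one]
    conv_rhs => rw [hpars]
    push_cast
    rw [Finset.mul_sum]
    refine Finset.sum_congr rfl fun i _ => ?_
    rw [hb i, ← Complex.conj_mul' (a i)]
    simp only [← starRingEnd_apply]
    ring
  exact_mod_cast mul_left_cancel₀ hγ hs
end

section
/- Let E ∈ ℝ satisfy E ≠ r·λ_i for every i and Σ_{i=1}^{n} |a_i|²/(E − r·λ_i) = 1. Then the vector ψ := Σ_{i=1}^{n} (a_i/(E − r·λ_i))·v_i is nonzero and satisfies H_search ψ = E·ψ; in particular, E is an eigenvalue of H_search. -/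
open Matrix BigOperators

/-- If a real number `E` avoids all values `r·λ i` and satisfies the secular
equation `∑ i, |a i|²/(E − r·λ i) = 1`, then `ψ = ∑ i (a i/(E − r·λ i))·v i` is a nonzero
eigenvector of `H_search = r•H + |w⟩⟨w|` with eigenvalue `E`; in particular `E` is an
eigenvalue of `H_search`. -/
theorem eigenvector_of_secular_equation
    (n : ℕ) (H : Matrix (Fin n) (Fin n) ℂ) (hH : H.IsHermitian)
    (v : Fin n → (Fin n → ℂ)) (lam : Fin n → ℝ) (hlam : Monotone lam)
    (hortho : ∀ i j, star (v i) ⬝ᵥ v j = if i = j then 1 else 0)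
    (heig : ∀ i, H.mulVec (v i) = (lam i : ℂ) • v i)
    (w : Fin n → ℂ) (hw : star w ⬝ᵥ w = 1)
    (a : Fin n → ℂ) (ha : ∀ i, a i = star (v i) ⬝ᵥ w)
    (r : ℝ)
    (Hs : Matrix (Fin n) (Fin n) ℂ)
    (hHs : Hs = (r : ℂ) • H + Matrix.vecMulVec w (star w))
    (E : ℝ) (hE : ∀ i, E ≠ r * lam i)
    (hsec : ∑ i, ‖a i‖ ^ 2 / (E - r * lam i) = 1)
    (ψ : Fin n → ℂ)
    (hψdef : ψ = ∑ i, (a i / ((E : ℂ) - (r : ℂ) * (lam i : ℂ))) • v i) :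
    ψ ≠ 0 ∧ Hs.mulVec ψ = (E : ℂ) • ψ ∧
      Module.End.HasEigenvalue (Matrix.toLin' Hs) (E : ℂ) := by
  have hd : ∀ i, (E : ℂ) - (r : ℂ) * (lam i : ℂ) ≠ 0 := by
    intro i h
    apply hE i
    have h2 := sub_eq_zero.mp h
    exact_mod_cast h2
  have hcomp : w = ∑ i, a i • v i := by
    let V : Matrix (Fin n) (Fin n) ℂ := Matrix.of v
    have h1 : V.map star * Vᵀ = 1 := by
      ext i j
      have := hortho i j
      rw [Matrix.one_apply, ← this]
      simp [Matrix.mul_apply, dotProduct, V]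
    have h2 : Vᵀ * V.map star = 1 := mul_eq_one_comm.mp h1
    have h3 : V.map star *ᵥ w = a := by
      ext i
      rw [ha i]
      simp [Matrix.mulVec, dotProduct, V]
    have h4 : Vᵀ *ᵥ a = w := by
      rw [← h3, Matrix.mulVec_mulVec, h2, Matrix.one_mulVec]
    rw [← h4]
    ext k
    simp [Matrix.mulVec, dotProduct, V, Finset.sum_apply, mul_comm]
  have hwv : ∀ i, star w ⬝ᵥ v i = star (a i) := by
    intro i
    rw [ha i, Matrix.star_dotProduct]
  have hin : star w ⬝ᵥ ψ = 1 := by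
    rw [hψdef, dotProduct_sum]
    have h : ((∑ i, ‖a i‖ ^ 2 / (E - r * lam i) : ℝ) : ℂ) = 1 := by rw [hsec]; simp
    rw [← h]
    push_cast
    refine Finset.sum_congr rfl fun i _ => ?_
    rw [dotProduct_smul, hwv, smul_eq_mul, ← Complex.mul_conj']
    simp only [starRingEnd_apply]
    ring
  have h0 : ψ ≠ 0 := by
    rintro h
    rw [h] at hin
    simp at hin
  have hev : Hs.mulVec ψ = (E : ℂ) • ψ := by
    have hP : Matrix.vecMulVec w (star w) *ᵥ ψ = w := by
      rw [Matrix.vecMulVec_mulVec, hin]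
      simp
    rw [hHs, Matrix.add_mulVec, hP, Matrix.smul_mulVec, hψdef, Matrix.mulVec_sum]
    conv_lhs => rw [hcomp]
    rw [Finset.smul_sum, Finset.smul_sum, ← Finset.sum_add_distrib]
    refine Finset.sum_congr rfl fun i _ => ?_
    rw [Matrix.mulVec_smul, heig, smul_smul, smul_smul, smul_smul, ← add_smul]
    congr 1
    have := hd i
    field_simp
    ring
  refine ⟨h0, hev, ?_⟩
  refine Module.End.hasEigenvalue_of_hasEigenvector (x := ψ) ⟨?_, h0⟩
  rw [Module.End.mem_eigenspace_iff, Matrix.toLin'_apply, hev]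
end

section
/- Let ψ be a unit eigenvector of H_search with eigenvalue E ∈ ℝ such that E ≠ r·λ_i for every i, and set γ = ⟨w, ψ⟩. Then γ ≠ 0 and the normalization identity 1/|γ|² = Σ_{i=1}^{n} |a_i|²/(E − r·λ_i)² holds. -/
open Matrix BigOperators

/-- Let `ψ` be a unit eigenvector of `H_search = r•H + |w⟩⟨w|` with real
eigenvalue `E` such that `E ≠ r·λ i` for every `i`, and set `γ = ⟨w, ψ⟩`. Then `γ ≠ 0` and
`1/|γ|² = ∑ i, |a i|²/(E − r·λ i)²`. -/
theorem normalization_identity_of_unit_eigenvector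
    (n : ℕ) (H : Matrix (Fin n) (Fin n) ℂ) (hH : H.IsHermitian)
    (v : Fin n → (Fin n → ℂ)) (lam : Fin n → ℝ) (hlam : Monotone lam)
    (hortho : ∀ i j, star (v i) ⬝ᵥ v j = if i = j then 1 else 0)
    (heig : ∀ i, H.mulVec (v i) = (lam i : ℂ) • v i)
    (w : Fin n → ℂ) (hw : star w ⬝ᵥ w = 1)
    (a : Fin n → ℂ) (ha : ∀ i, a i = star (v i) ⬝ᵥ w)
    (r : ℝ)
    (Hs : Matrix (Fin n) (Fin n) ℂ)
    (hHs : Hs = (r : ℂ) • H + Matrix.vecMulVec w (star w))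
    (ψ : Fin n → ℂ) (hψ : star ψ ⬝ᵥ ψ = 1)
    (E : ℝ) (heigψ : Hs.mulVec ψ = (E : ℂ) • ψ)
    (hE : ∀ i, E ≠ r * lam i) :
    star w ⬝ᵥ ψ ≠ 0 ∧
    1 / ‖star w ⬝ᵥ ψ‖ ^ 2 = ∑ i, ‖a i‖ ^ 2 / (E - r * lam i) ^ 2 := by
  set g := star w ⬝ᵥ ψ with hg
  have hleft : ∀ i, star (v i) ᵥ* H = (lam i : ℂ) • star (v i) := by
    intro i
    have h := congrArg star (heig i)
    rw [Matrix.star_mulVec, hH.eq] at h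
    rw [h, star_smul]
    simp
  have hc : ∀ i, (star (v i) ⬝ᵥ ψ) * ((E - r * lam i : ℝ) : ℂ) = a i * g := by
    intro i
    have h := congrArg (fun x => star (v i) ⬝ᵥ x) heigψ
    simp only [hHs, Matrix.add_mulVec, Matrix.smul_mulVec, dotProduct_add, dotProduct_smul,
      Matrix.vecMulVec_mulVec, Matrix.dotProduct_mulVec, hleft, smul_dotProduct, smul_eq_mul] at h
    rw [← hg, ← ha i] at h
    simp only [op_smul_eq_smul, smul_eq_mul] at h
    push_cast
    linear_combination -h
  let U : Matrix (Fin n) (Fin n) ℂ := Matrix.of fun i => star (v i)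
  have hU : U * Uᴴ = 1 := by
    ext i j
    rw [Matrix.one_apply, ← hortho i j]
    simp [U, Matrix.mul_apply, dotProduct]
  have hU' : Uᴴ * U = 1 := mul_eq_one_comm.mp hU
  have hsumC : star (U *ᵥ ψ) ⬝ᵥ (U *ᵥ ψ) = 1 := by
    rw [Matrix.star_mulVec, ← Matrix.dotProduct_mulVec, Matrix.mulVec_mulVec, hU',
      Matrix.one_mulVec, hψ]
  have hsum : ∑ i, ‖star (v i) ⬝ᵥ ψ‖ ^ 2 = 1 := by
    have h2 : ((∑ i, ‖star (v i) ⬝ᵥ ψ‖ ^ 2 : ℝ) : ℂ) = 1 := by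
      rw [← hsumC]
      push_cast
      refine Finset.sum_congr rfl fun i _ => ?_
      exact (Complex.conj_mul' _).symm
    exact_mod_cast h2
  have hterm : ∀ i, ‖star (v i) ⬝ᵥ ψ‖ ^ 2
      = ‖a i‖ ^ 2 / (E - r * lam i) ^ 2 * ‖g‖ ^ 2 := by
    intro i
    have hne : E - r * lam i ≠ 0 := sub_ne_zero.mpr (hE i)
    have h := congrArg (fun x : ℂ => ‖x‖ ^ 2) (hc i)
    simp only [norm_mul, mul_pow, Complex.norm_real, Real.norm_eq_abs, sq_abs] at h
    field_simp
    linarith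
  have hS : (∑ i, ‖a i‖ ^ 2 / (E - r * lam i) ^ 2) * ‖g‖ ^ 2 = 1 := by
    rw [Finset.sum_mul, ← hsum]
    exact Finset.sum_congr rfl fun i _ => (hterm i).symm
  have hg0 : g ≠ 0 := by
    intro h
    simp [h] at hS
  refine ⟨hg0, ?_⟩
  have : ‖g‖ ^ 2 ≠ 0 := by simpa using hg0
  rw [div_eq_iff this, hS]
end

section
/- Assume r > 0, the eigenvalues of H are simple (λ_1 < λ_2 < … < λ_n), and a_i ≠ 0 for every i. Then all n eigenvalues of H_search are simple, and when ordered as E_1 < E_2 < … < E_n they interlace the scaled spectrum of H: r·λ_i < E_i < r·λ_{i+1} for every 1 ≤ i ≤ n−1, and E_n > r·λ_n. -/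
open Matrix BigOperators

lemma aux_ivt (p : ℝ → ℝ) (hp : Continuous p) (a b : ℝ) (hab : a < b) (h : p a * p b < 0) :
    ∃ c, a < c ∧ c < b ∧ p c = 0 := by
  rcases mul_neg_iff.1 h with ⟨h1, h2⟩ | ⟨h1, h2⟩
  · obtain ⟨c, hc, hc'⟩ := intermediate_value_Ioo' hab.le hp.continuousOn ⟨h2, h1⟩
    exact ⟨c, hc.1, hc.2, hc'⟩
  · obtain ⟨c, hc, hc'⟩ := intermediate_value_Ioo hab.le hp.continuousOn ⟨h1, h2⟩
    exact ⟨c, hc.1, hc.2, hc'⟩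

lemma aux_secular (n : ℕ) (μ c : Fin (n + 1) → ℝ) (hμ : StrictMono μ) (hc : ∀ i, 0 < c i) :
    ∃ E : Fin (n + 1) → ℝ, (∀ i, μ i < E i) ∧
      (∀ (i : Fin (n + 1)) (h : (i : ℕ) + 1 < n + 1), E i < μ ⟨(i : ℕ) + 1, h⟩) ∧
      (∀ i j, E i - μ j ≠ 0) ∧ ∀ i, ∑ j, c j / (E i - μ j) = 1 := by
  classical
  set p : ℝ → ℝ := fun x => ∏ j, (x - μ j) - ∑ i, c i * ∏ j ∈ Finset.univ.erase i, (x - μ j)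
    with hpdef
  have hpc : Continuous p := by fun_prop
  have hpμ : ∀ k, p (μ k) = - (c k * ∏ j ∈ Finset.univ.erase k, (μ k - μ j)) := by
    intro k
    simp only [hpdef]
    rw [Finset.prod_eq_zero (Finset.mem_univ k) (sub_self _), zero_sub,
      Finset.sum_eq_single k]
    · intro b _ hb
      rw [Finset.prod_eq_zero (i := k) (by simp [hb.symm]) (sub_self _), mul_zero]
    · simp
  have hpf : ∀ x, (∀ j, x - μ j ≠ 0) →
      p x = (∏ j, (x - μ j)) * (1 - ∑ j, c j / (x - μ j)) := by
    intro x hx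
    simp only [hpdef]
    rw [mul_sub, mul_one, Finset.mul_sum]
    congr 1
    refine Finset.sum_congr rfl fun i _ => ?_
    rw [← Finset.mul_prod_erase _ _ (Finset.mem_univ i)]
    field_simp [hx i]
  have key : ∀ i : Fin (n + 1), ∃ e, μ i < e ∧
      (∀ (h : (i : ℕ) + 1 < n + 1), e < μ ⟨(i : ℕ) + 1, h⟩) ∧ p e = 0 := by
    intro i
    by_cases h : (i : ℕ) + 1 < n + 1
    · set k : Fin (n + 1) := ⟨(i : ℕ) + 1, h⟩ with hk
      have hik : i < k := by rw [Fin.lt_def]; simp [hk]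
      have hneg : p (μ i) * p (μ k) < 0 := by
        rw [hpμ, hpμ, ← Finset.mul_prod_erase (Finset.univ.erase i) _ (a := k) (by simp [hik.ne']),
          ← Finset.mul_prod_erase (Finset.univ.erase k) _ (a := i) (by simp [hik.ne]),
          Finset.erase_right_comm (a := k)]
        have hpos : 0 < (∏ j ∈ (Finset.univ.erase i).erase k, (μ i - μ j)) *
            ∏ j ∈ (Finset.univ.erase i).erase k, (μ k - μ j) := by
          rw [← Finset.prod_mul_distrib]
          refine Finset.prod_pos fun j hj => ?_
          simp only [Finset.mem_erase, Finset.mem_univ, and_true] at hj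
          rcases lt_or_gt_of_ne hj.2 with hlt | hgt
          · have h1 := hμ hlt
            have h2 := hμ hik
            exact mul_pos (by linarith) (by linarith)
          · have hkj : k < j := by
              refine lt_of_le_of_ne ?_ (Ne.symm hj.1)
              rw [Fin.le_def]; simp only [hk]; exact hgt
            have h1 := hμ hkj
            have h2 := hμ hik
            exact mul_pos_of_neg_of_neg (by linarith) (by linarith)
        have h2 : 0 < (μ k - μ i) := sub_pos.2 (hμ hik)
        have h3 := mul_pos (mul_pos (mul_pos (hc i) (hc k)) (mul_pos h2 h2)) hpos
        nlinarith [h3]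
      obtain ⟨e, h1, h2, h3⟩ := aux_ivt p hpc _ _ (hμ hik) hneg
      exact ⟨e, h1, fun _ => h2, h3⟩
    · have hle : ∀ j, j ≤ i := fun j => by rw [Fin.le_def]; omega
      have hS : 0 < ∑ j, c j := Finset.sum_pos (fun j _ => hc j) ⟨i, Finset.mem_univ i⟩
      set x := μ i + (∑ j, c j + 1) with hx
      have hxj : ∀ j, ∑ j, c j + 1 ≤ x - μ j := fun j => by
        have := hμ.monotone (hle j); linarith
      have hneg : p (μ i) * p x < 0 := by
        apply mul_neg_of_neg_of_pos
        · rw [hpμ, neg_lt_zero]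
          refine mul_pos (hc i) (Finset.prod_pos fun j hj => sub_pos.2 (hμ ?_))
          exact lt_of_le_of_ne (hle j) (Finset.ne_of_mem_erase hj)
        · rw [hpf x fun j => by have := hxj j; linarith]
          refine mul_pos (Finset.prod_pos fun j _ => by have := hxj j; linarith) ?_
          have : ∑ j, c j / (x - μ j) ≤ ∑ j, c j / (∑ j, c j + 1) :=
            Finset.sum_le_sum fun j _ =>
              div_le_div_of_nonneg_left (hc j).le (by linarith) (hxj j)
          rw [← Finset.sum_div] at this
          have h2 : (∑ j, c j) / (∑ j, c j + 1) < 1 := by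
            rw [div_lt_one (by linarith)]; linarith
          linarith
      obtain ⟨e, h1, h2, h3⟩ := aux_ivt p hpc _ _ (by linarith) hneg
      exact ⟨e, h1, fun h' => absurd h' h, h3⟩
  choose E h1 h2 h3 using key
  have hne : ∀ i j, E i - μ j ≠ 0 := by
    intro i j
    rcases le_or_gt j i with hj | hj
    · have := hμ.monotone hj
      have := h1 i
      exact (by linarith : 0 < E i - μ j).ne'
    · have hb : (i : ℕ) + 1 < n + 1 := by
        have := j.2; rw [Fin.lt_def] at hj; omega
      have := h2 i hb
      have h' : μ ⟨(i : ℕ) + 1, hb⟩ ≤ μ j := hμ.monotone (by rw [Fin.le_def]; exact hj)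
      exact (by linarith : E i - μ j < 0).ne
  refine ⟨E, h1, h2, hne, fun i => ?_⟩
  have := h3 i
  rw [hpf _ (hne i)] at this
  rcases mul_eq_zero.1 this with h | h
  · exact absurd h (Finset.prod_ne_zero_iff.2 fun j _ => hne i j)
  · linarith

/-- If `r > 0`, the eigenvalues of `H` are simple and `a i ≠ 0` for every `i`,
then all `n` eigenvalues of `H_search = r•H + |w⟩⟨w|` are simple (there is an orthonormal
eigenbasis with strictly increasing eigenvalues `E`), and they interlace the scaled spectrum of
`H`: `r·λ i < E i` for every `i` (in particular `E n > r·λ n` for the top index) and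
`E i < r·λ (i+1)` for every `i ≤ n−1`. -/
theorem interlacing_of_search_hamiltonian
    (n : ℕ) (H : Matrix (Fin (n + 1)) (Fin (n + 1)) ℂ) (hH : H.IsHermitian)
    (v : Fin (n + 1) → (Fin (n + 1) → ℂ)) (lam : Fin (n + 1) → ℝ)
    (hlam : StrictMono lam)
    (hortho : ∀ i j, star (v i) ⬝ᵥ v j = if i = j then 1 else 0)
    (heig : ∀ i, H.mulVec (v i) = (lam i : ℂ) • v i)
    (w : Fin (n + 1) → ℂ) (hw : star w ⬝ᵥ w = 1)
    (a : Fin (n + 1) → ℂ) (ha : ∀ i, a i = star (v i) ⬝ᵥ w)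
    (hane : ∀ i, a i ≠ 0)
    (r : ℝ) (hr : 0 < r)
    (Hs : Matrix (Fin (n + 1)) (Fin (n + 1)) ℂ)
    (hHs : Hs = (r : ℂ) • H + Matrix.vecMulVec w (star w)) :
    ∃ (E : Fin (n + 1) → ℝ) (ψ : Fin (n + 1) → (Fin (n + 1) → ℂ)),
      StrictMono E ∧
      (∀ α β, star (ψ α) ⬝ᵥ ψ β = if α = β then 1 else 0) ∧
      (∀ α, Hs.mulVec (ψ α) = (E α : ℂ) • ψ α) ∧
      (∀ i, r * lam i < E i) ∧
      (∀ (i : Fin (n + 1)) (h : (i : ℕ) + 1 < n + 1), E i < r * lam ⟨(i : ℕ) + 1, h⟩) := by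
  classical
  have hr0 : (r : ℂ) ≠ 0 := by exact_mod_cast hr.ne'
  obtain ⟨E, hE1, hE2, hne, hsec⟩ := aux_secular n (fun i => r * lam i)
    (fun i => Complex.normSq (a i)) (fun i j hij => mul_lt_mul_of_pos_left (hlam hij) hr)
    (fun i => Complex.normSq_pos.2 (hane i))
  have hEm : StrictMono E := by
    rw [Fin.strictMono_iff_lt_succ]
    intro i
    exact (hE2 i.castSucc (by simp)).trans (hE1 i.succ)
  set V : Matrix (Fin (n + 1)) (Fin (n + 1)) ℂ := Matrix.of fun x i => v i x with hV
  have hVV : Vᴴ * V = 1 := by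
    ext i j
    have := hortho i j
    simpa [Matrix.mul_apply, dotProduct, hV, Matrix.one_apply] using this
  have hVV' : V * Vᴴ = 1 := mul_eq_one_comm.1 hVV
  have haV : a = Vᴴ *ᵥ w := by
    ext i
    rw [ha]
    simp [Matrix.mulVec, dotProduct, hV]
  have hwV : V *ᵥ a = w := by
    rw [haV, Matrix.mulVec_mulVec, hVV', Matrix.one_mulVec]
  have hHV : H * V = V * Matrix.diagonal (fun i => (lam i : ℂ)) := by
    ext x i
    have := congrFun (heig i) x
    rw [Matrix.mul_diagonal]
    simpa [Matrix.mul_apply, Matrix.mulVec, dotProduct, hV, mul_comm] using this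
  have hinner : ∀ b c : Fin (n + 1) → ℂ, star (V *ᵥ b) ⬝ᵥ (V *ᵥ c) = star b ⬝ᵥ c := by
    intro b c
    rw [Matrix.star_mulVec, ← Matrix.dotProduct_mulVec, Matrix.mulVec_mulVec, hVV,
      Matrix.one_mulVec]
  have hneC : ∀ α i, (E α : ℂ) - r * lam i ≠ 0 := by
    intro α i
    exact_mod_cast hne α i
  set b : Fin (n + 1) → Fin (n + 1) → ℂ := fun α i => a i / ((E α : ℂ) - r * lam i) with hb
  have hsecC : ∀ α, star a ⬝ᵥ b α = 1 := by
    intro α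
    have := congrArg (fun x : ℝ => (x : ℂ)) (hsec α)
    push_cast at this
    rw [← this]
    simp only [dotProduct, hb, Pi.star_apply]
    refine Finset.sum_congr rfl fun i _ => ?_
    rw [Complex.normSq_eq_conj_mul_self, mul_div_assoc]
    rfl
  have hbeig : ∀ α, Hs *ᵥ (V *ᵥ b α) = (E α : ℂ) • (V *ᵥ b α) := by
    intro α
    have h1 : star w ⬝ᵥ (V *ᵥ b α) = 1 := by
      rw [← hwV, hinner, hsecC]
    rw [hHs, Matrix.add_mulVec, Matrix.vecMulVec_mulVec, h1, Matrix.smul_mulVec,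
      Matrix.mulVec_mulVec, hHV, ← Matrix.mulVec_mulVec]
    simp only [MulOpposite.op_one, one_smul]
    nth_rewrite 1 [← hwV]
    rw [← Matrix.mulVec_smul V, ← Matrix.mulVec_smul V, ← Matrix.mulVec_add]
    congr 1
    ext i
    have := hneC α i
    simp only [Pi.add_apply, Pi.smul_apply, Matrix.mulVec_diagonal, hb, smul_eq_mul]
    field_simp
    ring
  have horth : ∀ α β, α ≠ β → star (b α) ⬝ᵥ b β = 0 := by
    intro α β hαβ
    have hd : (E α : ℂ) - E β ≠ 0 := by
      rw [sub_ne_zero]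
      exact_mod_cast hEm.injective.ne hαβ
    have h : ((E α : ℂ) - E β) * (star (b α) ⬝ᵥ b β) = star a ⬝ᵥ b β - star a ⬝ᵥ b α := by
      simp only [dotProduct, Finset.mul_sum, ← Finset.sum_sub_distrib]
      refine Finset.sum_congr rfl fun i _ => ?_
      have h1 := hneC α i
      have h2 := hneC β i
      have h3 : star (b α) i = star (a i) / ((E α : ℂ) - r * lam i) := by
        simp [hb]
      rw [h3]
      simp only [hb, Pi.star_apply]
      field_simp
      ring
    rw [hsecC, hsecC, sub_self] at h
    exact (mul_eq_zero.1 h).resolve_left hd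
  set N : Fin (n + 1) → ℝ := fun α => ∑ i, Complex.normSq (b α i) with hN
  have hNC : ∀ α, star (b α) ⬝ᵥ b α = (N α : ℂ) := by
    intro α
    simp only [hN, dotProduct, Complex.ofReal_sum, Complex.normSq_eq_conj_mul_self]
    rfl
  have hNpos : ∀ α, 0 < N α := by
    intro α
    refine Finset.sum_pos (fun i _ => Complex.normSq_pos.2 ?_) ⟨0, Finset.mem_univ _⟩
    exact div_ne_zero (hane i) (hneC α i)
  refine ⟨E, fun α => (((Real.sqrt (N α))⁻¹ : ℝ) : ℂ) • (V *ᵥ b α), hEm, ?_, ?_, hE1, hE2⟩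
  · intro α β
    rw [star_smul, smul_dotProduct, dotProduct_smul, hinner]
    split_ifs with h
    · subst h
      have h1 : (Real.sqrt (N α))⁻¹ * ((Real.sqrt (N α))⁻¹ * N α) = 1 := by
        have h2 := Real.sqrt_pos.2 (hNpos α)
        have h3 := Real.mul_self_sqrt (hNpos α).le
        field_simp
        nlinarith
      rw [hNC]
      simp only [smul_eq_mul, Complex.star_def, Complex.conj_ofReal]
      exact_mod_cast h1
    · simp [horth α β h]
  · intro α
    rw [Matrix.mulVec_smul, hbeig, smul_comm]
end

section
/- Assume r > 0. Then H_search has at most one eigenvalue, counted with multiplicity, that is strictly greater than r·λ_n. Moreover, if the orthogonal projection of w onto the λ_n-eigenspace of H is nonzero, then H_search has exactly one eigenvalue strictly greater than r·λ_n, and this eigenvalue is simple. -/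
open Matrix BigOperators

lemma quad_exp {m : ℕ} (H : Matrix (Fin m) (Fin m) ℂ)
    (v : Fin m → (Fin m → ℂ)) (lam : Fin m → ℝ)
    (hortho : ∀ i j, star (v i) ⬝ᵥ v j = if i = j then 1 else 0)
    (heig : ∀ i, H.mulVec (v i) = (lam i : ℂ) • v i) (x : Fin m → ℂ) :
    star x ⬝ᵥ (H *ᵥ x) = ((∑ i, lam i * ‖star (v i) ⬝ᵥ x‖ ^ 2 : ℝ) : ℂ) := by
  set V : Matrix (Fin m) (Fin m) ℂ := Matrix.of (fun a i => v i a) with hV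
  have h1 : Vᴴ * V = 1 := by
    ext i j
    rw [Matrix.one_apply, ← hortho i j]
    simp [Matrix.mul_apply, dotProduct, hV]
  have h2 : V * Vᴴ = 1 := mul_eq_one_comm.mp h1
  have h3 : H * V = V * Matrix.diagonal (fun i => (lam i : ℂ)) := by
    ext a i
    have := congrFun (heig i) a
    rw [Matrix.mul_diagonal]
    simp only [Matrix.mulVec, dotProduct, Pi.smul_apply, smul_eq_mul] at this
    simp [Matrix.mul_apply, hV, this, mul_comm]
  have h4 : H = V * Matrix.diagonal (fun i => (lam i : ℂ)) * Vᴴ := by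
    rw [← h3, Matrix.mul_assoc, h2, Matrix.mul_one]
  have hc : ∀ i, (Vᴴ *ᵥ x) i = star (v i) ⬝ᵥ x := by
    intro i
    simp [Matrix.mulVec, dotProduct, hV]
  have hs : star x ᵥ* V = star (Vᴴ *ᵥ x) := by
    rw [Matrix.star_mulVec, Matrix.conjTranspose_conjTranspose]
  rw [h4, ← Matrix.mulVec_mulVec, ← Matrix.mulVec_mulVec, Matrix.dotProduct_mulVec, hs]
  simp only [dotProduct, Matrix.mulVec_diagonal, Pi.star_apply]
  push_cast
  refine Finset.sum_congr rfl fun i _ => ?_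
  rw [hc]
  have := Complex.conj_mul' (star (v i) ⬝ᵥ x)
  simp only [dotProduct, Pi.star_apply] at this ⊢
  rw [← this]
  simp only [← starRingEnd_apply]
  ring

lemma norm_exp {m : ℕ} (v : Fin m → (Fin m → ℂ))
    (hortho : ∀ i j, star (v i) ⬝ᵥ v j = if i = j then 1 else 0) (x : Fin m → ℂ) :
    star x ⬝ᵥ x = ((∑ i, ‖star (v i) ⬝ᵥ x‖ ^ 2 : ℝ) : ℂ) := by
  have := quad_exp 1 v (fun _ => 1) hortho (by simp) x
  simpa using this


/-- If `r > 0`, then `H_search = r•H + |w⟩⟨w|` has at most one eigenvalue,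
counted with multiplicity, strictly greater than `r·λ_n` (the sum of the corresponding
eigenspaces has dimension at most 1). Moreover, if the orthogonal projection of `w` onto the
`λ_n`-eigenspace of `H` is nonzero (i.e. some `λ_n`-eigenvector of `H` is not orthogonal to
`w`), then this dimension is exactly 1: there is exactly one such eigenvalue and it is simple. -/
theorem at_most_one_eigenvalue_above_top
    (n : ℕ) (H : Matrix (Fin (n + 1)) (Fin (n + 1)) ℂ) (hH : H.IsHermitian)
    (v : Fin (n + 1) → (Fin (n + 1) → ℂ)) (lam : Fin (n + 1) → ℝ)
    (hlam : Monotone lam)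
    (hortho : ∀ i j, star (v i) ⬝ᵥ v j = if i = j then 1 else 0)
    (heig : ∀ i, H.mulVec (v i) = (lam i : ℂ) • v i)
    (w : Fin (n + 1) → ℂ) (hw : star w ⬝ᵥ w = 1)
    (r : ℝ) (hr : 0 < r)
    (Hs : Matrix (Fin (n + 1)) (Fin (n + 1)) ℂ)
    (hHs : Hs = (r : ℂ) • H + Matrix.vecMulVec w (star w)) :
    Module.finrank ℂ
      ↥(⨆ μ : {μ : ℝ // r * lam (Fin.last n) < μ},
          Module.End.eigenspace (Matrix.toLin' Hs) ((μ : ℝ) : ℂ)) ≤ 1 ∧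
    ((∃ u : Fin (n + 1) → ℂ,
        H.mulVec u = (lam (Fin.last n) : ℂ) • u ∧ star u ⬝ᵥ w ≠ 0) →
      Module.finrank ℂ
        ↥(⨆ μ : {μ : ℝ // r * lam (Fin.last n) < μ},
            Module.End.eigenspace (Matrix.toLin' Hs) ((μ : ℝ) : ℂ)) = 1) := by
  set c := r * lam (Fin.last n) with hcdef
  have hsa : Hs.IsHermitian := by
    rw [hHs]
    refine Matrix.IsHermitian.add ?_ ?_
    · rw [Matrix.IsHermitian, Matrix.conjTranspose_smul, hH.eq]
      simp
    · rw [Matrix.IsHermitian, Matrix.conjTranspose_vecMulVec, star_star]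
  obtain ⟨b, nu, hb, hnu⟩ : ∃ (b : Fin (n + 1) → (Fin (n + 1) → ℂ)) (nu : Fin (n + 1) → ℝ),
      (∀ i j, star (b i) ⬝ᵥ b j = if i = j then 1 else 0) ∧
      (∀ i, Hs.mulVec (b i) = (nu i : ℂ) • b i) := by
    refine ⟨fun i => (hsa.eigenvectorBasis i).ofLp, hsa.eigenvalues, ?_, ?_⟩
    · intro i j
      have := orthonormal_iff_ite.mp hsa.eigenvectorBasis.orthonormal i j
      rw [EuclideanSpace.inner_eq_star_dotProduct, dotProduct_comm] at this
      exact this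
    · intro i
      have := hsa.mulVec_eigenvectorBasis i
      rw [this]
      ext a
      simp
  have hq : ∀ x, star x ⬝ᵥ (Hs *ᵥ x)
      = (r : ℂ) * (star x ⬝ᵥ (H *ᵥ x)) + ((‖star w ⬝ᵥ x‖ ^ 2 : ℝ) : ℂ) := by
    intro x
    rw [hHs, Matrix.add_mulVec, dotProduct_add, Matrix.smul_mulVec, dotProduct_smul, smul_eq_mul,
      Matrix.vecMulVec_mulVec]
    congr 1
    have h := Complex.conj_mul' (star w ⬝ᵥ x)
    have h' : (starRingEnd ℂ) (star w ⬝ᵥ x) = star x ⬝ᵥ w := by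
      rw [starRingEnd_apply, Matrix.star_dotProduct, star_star]
    rw [h'] at h
    push_cast
    rw [← h]
    simp [dotProduct_smul, mul_comm]
  set S := (⨆ μ : {μ : ℝ // c < μ},
          Module.End.eigenspace (Matrix.toLin' Hs) ((μ : ℝ) : ℂ)) with hS
  have horth : ∀ x ∈ S, ∀ j, nu j ≤ c → star (b j) ⬝ᵥ x = 0 := by
    intro x hx j hj
    have hle : S ≤ LinearMap.ker (dotProductBilin ℂ ℂ (star (b j))) := by
      refine iSup_le ?_
      rintro ⟨μ, hμ⟩ y hy
      rw [Module.End.mem_eigenspace_iff, Matrix.toLin'_apply] at hy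
      rw [LinearMap.mem_ker]
      change star (b j) ⬝ᵥ y = 0
      have e1 : star (b j) ⬝ᵥ (Hs *ᵥ y) = (nu j : ℂ) * (star (b j) ⬝ᵥ y) := by
        rw [Matrix.dotProduct_mulVec]
        have : star (b j) ᵥ* Hs = (nu j : ℂ) • star (b j) := by
          have h := congrArg star (hnu j)
          rw [Matrix.star_mulVec, hsa.eq] at h
          rw [h, star_smul]
          simp
        rw [this, smul_dotProduct, smul_eq_mul]
      rw [hy, dotProduct_smul, smul_eq_mul] at e1
      have e2 : ((μ : ℂ) - (nu j : ℂ)) * (star (b j) ⬝ᵥ y) = 0 := by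
        linear_combination e1
      rcases mul_eq_zero.mp e2 with h | h
      · exfalso
        have : μ = nu j := by exact_mod_cast sub_eq_zero.mp h
        linarith
      · exact h
    exact hle hx
  -- expansions in real form
  have hreal : ∀ x, ∑ i, nu i * ‖star (b i) ⬝ᵥ x‖ ^ 2
      = r * ∑ i, lam i * ‖star (v i) ⬝ᵥ x‖ ^ 2 + ‖star w ⬝ᵥ x‖ ^ 2 := by
    intro x
    have h := hq x
    rw [quad_exp Hs b nu hb hnu, quad_exp H v lam hortho heig] at h
    exact_mod_cast h
  have hnorm : ∀ x, ∑ i, ‖star (b i) ⬝ᵥ x‖ ^ 2 = ∑ i, ‖star (v i) ⬝ᵥ x‖ ^ 2 := by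
    intro x
    have h := norm_exp b hb x
    rw [norm_exp v hortho x] at h
    exact_mod_cast h.symm
  have hzero : ∀ x, (∑ i, ‖star (b i) ⬝ᵥ x‖ ^ 2) = 0 → x = 0 := by
    intro x h
    have h' := norm_exp b hb x
    rw [h] at h'
    open scoped ComplexOrder in
    exact dotProduct_star_self_eq_zero.mp (by simpa only [Complex.ofReal_zero] using h')
  have hinj : ∀ x ∈ S, star w ⬝ᵥ x = 0 → x = 0 := by
    intro x hx hwx
    apply hzero
    have h1 := hreal x
    rw [hwx] at h1
    have h2 : r * ∑ i, lam i * ‖star (v i) ⬝ᵥ x‖ ^ 2 ≤ c * ∑ i, ‖star (b i) ⬝ᵥ x‖ ^ 2 := by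
      rw [hnorm, hcdef, mul_assoc, Finset.mul_sum Finset.univ _ (lam (Fin.last n))]
      refine mul_le_mul_of_nonneg_left (Finset.sum_le_sum fun i _ => ?_) hr.le
      exact mul_le_mul_of_nonneg_right (hlam (Fin.le_last i)) (sq_nonneg _)
    have h3 : ∑ i, (nu i - c) * ‖star (b i) ⬝ᵥ x‖ ^ 2 ≤ 0 := by
      simp only [sub_mul, Finset.sum_sub_distrib, ← Finset.mul_sum]
      norm_num at h1
      linarith
    have hnn : ∀ i ∈ Finset.univ, 0 ≤ (nu i - c) * ‖star (b i) ⬝ᵥ x‖ ^ 2 := by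
      intro i _
      rcases le_or_gt (nu i) c with h | h
      · simp [horth x hx i h]
      · exact mul_nonneg (by linarith) (sq_nonneg _)
    have h4 := (Finset.sum_eq_zero_iff_of_nonneg hnn).mp
      (le_antisymm h3 (Finset.sum_nonneg hnn))
    refine Finset.sum_eq_zero fun i hi => ?_
    rcases le_or_gt (nu i) c with h | h
    · simp [horth x hx i h]
    · exact (mul_eq_zero.mp (h4 i hi)).resolve_left (by linarith)
  have hle : Module.finrank ℂ S ≤ 1 := by
    let f : S →ₗ[ℂ] ℂ := (dotProductBilin ℂ ℂ (star w)).comp S.subtype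
    have hf : Function.Injective f := by
      rw [injective_iff_map_eq_zero]
      intro x hx
      exact Subtype.ext (hinj x x.2 hx)
    simpa using LinearMap.finrank_le_finrank_of_injective hf
  refine ⟨hle, ?_⟩
  rintro ⟨u, hu, huw⟩
  refine le_antisymm hle ?_
  have hex : ∃ j, c < nu j := by
    by_contra! hall
    have h1 : ∑ i, nu i * ‖star (b i) ⬝ᵥ u‖ ^ 2 ≤ c * ∑ i, ‖star (b i) ⬝ᵥ u‖ ^ 2 := by
      rw [Finset.mul_sum]
      exact Finset.sum_le_sum fun i _ => mul_le_mul_of_nonneg_right (hall i) (sq_nonneg _)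
    have h2 : ∑ i, lam i * ‖star (v i) ⬝ᵥ u‖ ^ 2
        = lam (Fin.last n) * ∑ i, ‖star (v i) ⬝ᵥ u‖ ^ 2 := by
      have h := quad_exp H v lam hortho heig u
      rw [hu, dotProduct_smul, smul_eq_mul, norm_exp v hortho u] at h
      exact_mod_cast h.symm
    rw [hreal, h2, hnorm, hcdef] at h1
    have h3 : 0 < ‖star w ⬝ᵥ u‖ := by
      rw [norm_pos_iff]
      intro h
      apply huw
      rw [Matrix.star_dotProduct, h, star_zero]
    nlinarith [pow_pos h3 2]
  obtain ⟨j, hj⟩ := hex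
  have hbS : b j ∈ S := by
    refine Submodule.mem_iSup_of_mem (⟨nu j, hj⟩ : {μ : ℝ // c < μ}) ?_
    rw [Module.End.mem_eigenspace_iff, Matrix.toLin'_apply]
    exact hnu j
  have hb0 : b j ≠ 0 := by
    intro h
    have := hb j j
    simp [h] at this
  rw [Nat.succ_le_iff, Module.finrank_pos_iff]
  exact ⟨⟨b j, hbS⟩, 0, fun h => hb0 (congrArg Subtype.val h)⟩
end

section
/- Assume H_search admits an orthonormal eigenbasis ψ_1,…,ψ_n with real eigenvalues E_1,…,E_n such that E_α ≠ r·λ_i for all α and i, and set γ_α = ⟨w, ψ_α⟩. Then for every t ∈ ℝ, ⟨w, exp(−i t H_search) v_n⟩ = conj(a_n) · Σ_{α=1}^{n} |γ_α|² e^{−i t E_α}/(E_α − r·λ_n), where exp denotes the matrix exponential. -/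
open Matrix BigOperators

/-- If `H_search = r•H + |w⟩⟨w|` admits an orthonormal eigenbasis `ψ` with real
eigenvalues `E` such that `E α ≠ r·λ i` for all `α, i`, and `γ α = ⟨w, ψ α⟩`, then for every
`t ∈ ℝ`, `⟨w, exp(−i t H_search) v_n⟩ = conj(a_n)·∑ α, |γ α|² e^{−i t E α}/(E α − r·λ_n)`. -/
theorem amplitude_formula
    (n : ℕ) (H : Matrix (Fin (n + 1)) (Fin (n + 1)) ℂ) (hH : H.IsHermitian)
    (v : Fin (n + 1) → (Fin (n + 1) → ℂ)) (lam : Fin (n + 1) → ℝ)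
    (hlam : Monotone lam)
    (hortho : ∀ i j, star (v i) ⬝ᵥ v j = if i = j then 1 else 0)
    (heig : ∀ i, H.mulVec (v i) = (lam i : ℂ) • v i)
    (w : Fin (n + 1) → ℂ) (hw : star w ⬝ᵥ w = 1)
    (a : Fin (n + 1) → ℂ) (ha : ∀ i, a i = star (v i) ⬝ᵥ w)
    (r : ℝ)
    (Hs : Matrix (Fin (n + 1)) (Fin (n + 1)) ℂ)
    (hHs : Hs = (r : ℂ) • H + Matrix.vecMulVec w (star w))
    (ψ : Fin (n + 1) → (Fin (n + 1) → ℂ)) (E : Fin (n + 1) → ℝ)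
    (horthoψ : ∀ α β, star (ψ α) ⬝ᵥ ψ β = if α = β then 1 else 0)
    (heigψ : ∀ α, Hs.mulVec (ψ α) = (E α : ℂ) • ψ α)
    (hEne : ∀ α i, E α ≠ r * lam i)
    (γ : Fin (n + 1) → ℂ) (hγ : ∀ α, γ α = star w ⬝ᵥ ψ α) :
    ∀ t : ℝ,
      star w ⬝ᵥ (NormedSpace.exp ((-(Complex.I * (t : ℂ))) • Hs)).mulVec (v (Fin.last n)) =
        (starRingEnd ℂ) (a (Fin.last n)) *
          ∑ α, (‖γ α‖ : ℂ) ^ 2 * Complex.exp (-(Complex.I * (t : ℂ) * (E α : ℂ))) /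
            ((E α : ℂ) - (r : ℂ) * (lam (Fin.last n) : ℂ)) := by
  intro t
  set c : ℂ := -(Complex.I * (t : ℂ)) with hc
  set m := Fin.last n with hm
  let U : Matrix (Fin (n + 1)) (Fin (n + 1)) ℂ := Matrix.of fun i j => ψ j i
  have hU : Uᴴ * U = 1 := by
    ext i j
    have h := horthoψ i j
    rw [Matrix.one_apply, ← h]
    rfl
  have hU' : U * Uᴴ = 1 := mul_eq_one_comm.mp hU
  have hinv : U⁻¹ = Uᴴ := Matrix.inv_eq_left_inv hU
  have hunit : IsUnit U := ⟨⟨U, Uᴴ, hU', hU⟩, rfl⟩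
  have hHU : Hs * U = U * Matrix.diagonal (fun α => (E α : ℂ)) := by
    ext i j
    have h := congrFun (heigψ j) i
    rw [Matrix.mul_diagonal, mul_comm]
    exact h
  have hHs2 : c • Hs = U * Matrix.diagonal (fun α => c * (E α : ℂ)) * U⁻¹ := by
    have h1 : Matrix.diagonal (fun α => c * (E α : ℂ))
        = c • Matrix.diagonal (fun α => (E α : ℂ)) := by
      rw [← Matrix.diagonal_smul]; rfl
    rw [h1, hinv, Matrix.mul_smul, Matrix.smul_mul, ← hHU, Matrix.mul_assoc, hU', Matrix.mul_one]
  have hexp : NormedSpace.exp (c • Hs)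
      = U * Matrix.diagonal (fun α => Complex.exp (c * (E α : ℂ))) * Uᴴ := by
    rw [hHs2, Matrix.exp_conj _ _ hunit, Matrix.exp_diagonal, hinv]
    congr 3
    ext α
    rw [Pi.coe_exp, Complex.exp_eq_exp_ℂ]
  have key : ∀ α, ((E α : ℂ) - (r : ℂ) * (lam m : ℂ)) * (star (ψ α) ⬝ᵥ v m)
      = (starRingEnd ℂ) (a m) * (starRingEnd ℂ) (γ α) := by
    intro α
    have hherm : Hs.IsHermitian := by
      rw [hHs]
      ext i j
      have := hH.apply i j
      simp [Matrix.vecMulVec_apply, mul_comm] at this ⊢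
      rw [this, mul_comm]
    have h1 : star (ψ α) ⬝ᵥ Hs.mulVec (v m) = (E α : ℂ) * (star (ψ α) ⬝ᵥ v m) := by
      rw [Matrix.dotProduct_mulVec]
      have : star (ψ α) ᵥ* Hs = star (Hs *ᵥ ψ α) := by
        rw [Matrix.star_mulVec, hherm.eq]
      rw [this, heigψ, star_smul, smul_dotProduct]
      simp
    have h2 : star (ψ α) ⬝ᵥ Hs.mulVec (v m)
        = (r : ℂ) * (lam m : ℂ) * (star (ψ α) ⬝ᵥ v m) + (star w ⬝ᵥ v m) * (star (ψ α) ⬝ᵥ w) := by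
      rw [hHs, Matrix.add_mulVec, Matrix.smul_mulVec, heig, Matrix.vecMulVec_mulVec,
        dotProduct_add, dotProduct_smul, dotProduct_smul, dotProduct_smul]
      simp [mul_assoc, mul_comm]
    have h3 : (starRingEnd ℂ) (a m) = star w ⬝ᵥ v m := by
      rw [ha, starRingEnd_apply, ← Matrix.star_dotProduct_star, star_star, dotProduct_comm]
    have h4 : (starRingEnd ℂ) (γ α) = star (ψ α) ⬝ᵥ w := by
      rw [hγ, starRingEnd_apply, ← Matrix.star_dotProduct_star, star_star, dotProduct_comm]
    rw [h3, h4]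
    linear_combination h2 - h1
  have hL : star w ⬝ᵥ (NormedSpace.exp (c • Hs)).mulVec (v m)
      = ∑ α, γ α * (Complex.exp (c * (E α : ℂ)) * (star (ψ α) ⬝ᵥ v m)) := by
    rw [hexp, ← Matrix.mulVec_mulVec, ← Matrix.mulVec_mulVec, Matrix.dotProduct_mulVec]
    refine Finset.sum_congr rfl fun α _ => ?_
    rw [Matrix.mulVec_diagonal, hγ]
    rfl
  rw [hL, Finset.mul_sum]
  refine Finset.sum_congr rfl fun α _ => ?_
  have hne : (E α : ℂ) - (r : ℂ) * (lam m : ℂ) ≠ 0 := by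
    rw [sub_ne_zero]
    exact_mod_cast hEne α m
  have hn : (‖γ α‖ : ℂ) ^ 2 = γ α * (starRingEnd ℂ) (γ α) := (Complex.mul_conj' _).symm
  have he : -(Complex.I * (t : ℂ) * (E α : ℂ)) = c * E α := by rw [hc]; ring
  rw [hn, he, ← mul_div_assoc, eq_div_iff hne]
  linear_combination γ α * Complex.exp (c * (E α : ℂ)) * key α
end

section
/- Assume H_search admits an orthonormal eigenbasis ψ_1,…,ψ_n with real eigenvalues E_1,…,E_n such that E_α ≠ r·λ_i for all α and i, set γ_α = ⟨w, ψ_α⟩, and assume a_n ≠ 0. Then Σ_{α=1}^{n} |γ_α|²/(E_α − r·λ_n) = 1. -/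
open Matrix BigOperators

/-- If `H_search = r•H + |w⟩⟨w|` admits an orthonormal eigenbasis `ψ` with real
eigenvalues `E` such that `E α ≠ r·λ i` for all `α, i`, `γ α = ⟨w, ψ α⟩`, and `a_n ≠ 0`, then
`∑ α, |γ α|²/(E α − r·λ_n) = 1`. -/
theorem initial_amplitude_identity
    (n : ℕ) (H : Matrix (Fin (n + 1)) (Fin (n + 1)) ℂ) (hH : H.IsHermitian)
    (v : Fin (n + 1) → (Fin (n + 1) → ℂ)) (lam : Fin (n + 1) → ℝ)
    (hlam : Monotone lam)
    (hortho : ∀ i j, star (v i) ⬝ᵥ v j = if i = j then 1 else 0)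
    (heig : ∀ i, H.mulVec (v i) = (lam i : ℂ) • v i)
    (w : Fin (n + 1) → ℂ) (hw : star w ⬝ᵥ w = 1)
    (a : Fin (n + 1) → ℂ) (ha : ∀ i, a i = star (v i) ⬝ᵥ w)
    (r : ℝ)
    (Hs : Matrix (Fin (n + 1)) (Fin (n + 1)) ℂ)
    (hHs : Hs = (r : ℂ) • H + Matrix.vecMulVec w (star w))
    (ψ : Fin (n + 1) → (Fin (n + 1) → ℂ)) (E : Fin (n + 1) → ℝ)
    (horthoψ : ∀ α β, star (ψ α) ⬝ᵥ ψ β = if α = β then 1 else 0)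
    (heigψ : ∀ α, Hs.mulVec (ψ α) = (E α : ℂ) • ψ α)
    (hEne : ∀ α i, E α ≠ r * lam i)
    (γ : Fin (n + 1) → ℂ) (hγ : ∀ α, γ α = star w ⬝ᵥ ψ α)
    (han : a (Fin.last n) ≠ 0) :
    ∑ α, ‖γ α‖ ^ 2 / (E α - r * lam (Fin.last n)) = 1 := by
  have key : ∀ α, star (v (Fin.last n)) ⬝ᵥ ψ α * ((E α : ℂ) - r * lam (Fin.last n))
      = a (Fin.last n) * γ α := by
    intro α
    have h1 : star (v (Fin.last n)) ᵥ* H = (lam (Fin.last n) : ℂ) • star (v (Fin.last n)) := by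
      have h := congrArg star (heig (Fin.last n))
      rw [Matrix.star_mulVec, hH.eq] at h
      rw [h]
      ext j
      simp
    have h2 := congrArg (fun x => star (v (Fin.last n)) ⬝ᵥ x) (heigψ α)
    simp only [hHs, Matrix.add_mulVec, Matrix.smul_mulVec, dotProduct_add, dotProduct_smul,
      Matrix.dotProduct_mulVec, h1, smul_dotProduct, Matrix.vecMul_vecMulVec, smul_eq_mul] at h2
    rw [ha, hγ]
    linear_combination -h2
  have hc : (Matrix.of ψ).map star * (Matrix.of ψ)ᵀ = 1 := by
    ext i j
    have h := horthoψ i j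
    simpa [Matrix.mul_apply, dotProduct, Matrix.one_apply] using h
  have hc' := mul_eq_one_comm.mp hc
  have hsum : a (Fin.last n)
      = ∑ α, (star (v (Fin.last n)) ⬝ᵥ ψ α) * star (γ α) := by
    have h : star (v (Fin.last n)) ⬝ᵥ (((Matrix.of ψ)ᵀ * (Matrix.of ψ).map star) *ᵥ w)
        = a (Fin.last n) := by
      rw [hc', Matrix.one_mulVec, ha]
    rw [← h, ← Matrix.mulVec_mulVec, Matrix.dotProduct_mulVec]
    simp only [dotProduct, Matrix.vecMul, Matrix.mulVec]
    refine Finset.sum_congr rfl fun α _ => ?_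
    rw [hγ]
    simp [dotProduct, mul_comm]
  have hfin : a (Fin.last n) * (∑ α, ((‖γ α‖ ^ 2 / (E α - r * lam (Fin.last n)) : ℝ) : ℂ))
      = a (Fin.last n) * 1 := by
    rw [mul_one, Finset.mul_sum]
    conv_rhs => rw [hsum]
    refine Finset.sum_congr rfl fun α _ => ?_
    have hne : (E α : ℂ) - r * lam (Fin.last n) ≠ 0 := by
      have := sub_ne_zero.mpr (hEne α (Fin.last n))
      exact_mod_cast this
    have hn : ((‖γ α‖ : ℂ)) ^ 2 = γ α * star (γ α) := (Complex.mul_conj' (γ α)).symm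
    push_cast
    rw [hn, ← mul_div_assoc, div_eq_iff hne]
    linear_combination -(star (γ α)) * key α
  have := mul_left_cancel₀ han hfin
  exact_mod_cast this
end

section
/- Assume λ_n = 1, a_n ≠ 0 with ε = |a_n|², and that H_search admits an orthonormal eigenbasis ψ_1,…,ψ_n with real eigenvalues E_1 ≤ … ≤ E_n such that E_α ≠ r·λ_i for all α and i, E_α < r for every α < n, and E_n > r. Set δ₊ = E_n − r. Then for every t ∈ ℝ, |⟨w, exp(−i t H_search) v_n⟩| ≤ 2δ₊/√ε − √ε. -/
open Matrix BigOperators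

lemma aux_sum {m : ℕ} (ψ : Fin m → Fin m → ℂ) (e : Fin m → ℂ) (x y : Fin m → ℂ) :
    star x ⬝ᵥ ((Matrix.of fun i α => ψ α i) * diagonal e * (Matrix.of fun i α => ψ α i)ᴴ) *ᵥ y
      = ∑ α, e α * ((star x ⬝ᵥ ψ α) * (star (ψ α) ⬝ᵥ y)) := by
  rw [← mulVec_mulVec, ← mulVec_mulVec, dotProduct_mulVec]
  rw [dotProduct]
  refine Finset.sum_congr rfl fun α _ => ?_
  rw [mulVec_diagonal]
  have h1 : (star x ᵥ* (Matrix.of fun i α => ψ α i)) α = star x ⬝ᵥ ψ α := rfl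
  have h2 : ((Matrix.of fun i α => ψ α i)ᴴ *ᵥ y) α = star (ψ α) ⬝ᵥ y := rfl
  rw [h1, h2]; ring

/-- Assume `λ_n = 1`, `a_n ≠ 0` with `ε = |a_n|²`, and that
`H_search = r•H + |w⟩⟨w|` admits an orthonormal eigenbasis `ψ` with real eigenvalues
`E 1 ≤ … ≤ E n` avoiding all `r·λ i`, with `E α < r` for `α < n` and `E n > r`. Setting
`δ₊ = E n − r`, for every `t ∈ ℝ` we have
`|⟨w, exp(−i t H_search) v_n⟩| ≤ 2δ₊/√ε − √ε`. -/
theorem amplitude_upper_bound_above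
    (n : ℕ) (H : Matrix (Fin (n + 1)) (Fin (n + 1)) ℂ) (hH : H.IsHermitian)
    (v : Fin (n + 1) → (Fin (n + 1) → ℂ)) (lam : Fin (n + 1) → ℝ)
    (hlam : Monotone lam) (hlam0 : ∀ i, 0 ≤ lam i)
    (hlast : lam (Fin.last n) = 1)
    (hlt : ∀ i, i ≠ Fin.last n → lam i < 1)
    (hortho : ∀ i j, star (v i) ⬝ᵥ v j = if i = j then 1 else 0)
    (heig : ∀ i, H.mulVec (v i) = (lam i : ℂ) • v i)
    (w : Fin (n + 1) → ℂ) (hw : star w ⬝ᵥ w = 1)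
    (a : Fin (n + 1) → ℂ) (ha : ∀ i, a i = star (v i) ⬝ᵥ w)
    (han : a (Fin.last n) ≠ 0)
    (ε : ℝ) (hε : ε = ‖a (Fin.last n)‖ ^ 2)
    (r : ℝ)
    (Hs : Matrix (Fin (n + 1)) (Fin (n + 1)) ℂ)
    (hHs : Hs = (r : ℂ) • H + Matrix.vecMulVec w (star w))
    (ψ : Fin (n + 1) → (Fin (n + 1) → ℂ)) (E : Fin (n + 1) → ℝ)
    (hE : Monotone E)
    (horthoψ : ∀ α β, star (ψ α) ⬝ᵥ ψ β = if α = β then 1 else 0)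
    (heigψ : ∀ α, Hs.mulVec (ψ α) = (E α : ℂ) • ψ α)
    (hEne : ∀ α i, E α ≠ r * lam i)
    (hEltr : ∀ α, α ≠ Fin.last n → E α < r)
    (hEgt : r < E (Fin.last n))
    (δp : ℝ) (hδp : δp = E (Fin.last n) - r) :
    ∀ t : ℝ,
      ‖star w ⬝ᵥ (NormedSpace.exp ((-(Complex.I * (t : ℂ))) • Hs)).mulVec (v (Fin.last n))‖ ≤
        2 * δp / Real.sqrt ε - Real.sqrt ε := by
  intro t
  set L := Fin.last n with hL
  set U : Matrix (Fin (n+1)) (Fin (n+1)) ℂ := Matrix.of fun i α => ψ α i with hU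
  have hUU : Uᴴ * U = 1 := by
    ext α β
    rw [one_apply, ← horthoψ α β]; rfl
  have hUU' : U * Uᴴ = 1 := mul_eq_one_comm.mp hUU
  have hunit : IsUnit U := IsUnit.of_mul_eq_one _ hUU'
  have hinv : U⁻¹ = Uᴴ := inv_eq_right_inv hUU'
  have hHU : Hs * U = U * diagonal (fun α => (E α : ℂ)) := by
    ext i α
    have := congrFun (heigψ α) i
    rw [mul_diagonal]
    rw [mul_comm]
    exact this
  have hHs2 : Hs = U * diagonal (fun α => (E α : ℂ)) * U⁻¹ := by
    rw [← hHU, hinv, mul_assoc, hUU', mul_one]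
  have hexp : NormedSpace.exp ((-(Complex.I * (t : ℂ))) • Hs)
      = U * diagonal (fun α => Complex.exp (-(Complex.I * t) * E α)) * Uᴴ := by
    have h3 : (-(Complex.I * (t : ℂ))) • Hs
        = U * diagonal (fun α => -(Complex.I * t) * E α) * U⁻¹ := by
      have : diagonal (fun α => -(Complex.I * t) * (E α : ℂ))
          = (-(Complex.I * (t : ℂ))) • diagonal (fun α => (E α : ℂ)) := by
        rw [← diagonal_smul]; rfl
      rw [this, hHs2, Matrix.mul_smul, Matrix.smul_mul]
    rw [h3, exp_conj _ _ hunit, exp_diagonal, hinv]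
    congr 3
    rw [Pi.exp_def, Complex.exp_eq_exp_ℂ]
  have hstar : ∀ x y : Fin (n+1) → ℂ, star y ⬝ᵥ x = star (star x ⬝ᵥ y) := by
    intro x y
    simp [dotProduct, mul_comm]
  have hone : ∀ x y : Fin (n+1) → ℂ,
      star x ⬝ᵥ y = ∑ α, ((star x ⬝ᵥ ψ α) * (star (ψ α) ⬝ᵥ y)) := by
    intro x y
    have := aux_sum ψ (fun _ => 1) x y
    rw [← hU, diagonal_one, mul_one, hUU', one_mulVec] at this
    simpa using this
  have hrel : ∀ α, ((E α : ℂ) - r) * (star (v L) ⬝ᵥ ψ α) = a L * (star w ⬝ᵥ ψ α) := by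
    intro α
    have h1 : star (v L) ⬝ᵥ (Hs *ᵥ ψ α) = (E α : ℂ) * (star (v L) ⬝ᵥ ψ α) := by
      rw [heigψ, dotProduct_smul, smul_eq_mul]
    have h2 : star (v L) ⬝ᵥ (H *ᵥ ψ α) = star (v L) ⬝ᵥ ψ α := by
      have : star (v L) ᵥ* H = star (v L) := by
        have h := star_mulVec H (v L)
        rw [hH.eq, heig, hlast] at h
        rw [← h]; simp
      rw [dotProduct_mulVec, this]
    have h3 : star (v L) ⬝ᵥ (vecMulVec w (star w) *ᵥ ψ α) = a L * (star w ⬝ᵥ ψ α) := by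
      rw [vecMulVec_mulVec, ha]
      simp [dotProduct_smul, mul_comm]
    rw [hHs, add_mulVec, smul_mulVec, dotProduct_add, dotProduct_smul, h2, h3, smul_eq_mul] at h1
    linear_combination -h1
  have hEr : ∀ α, E α - r ≠ 0 := by
    intro α h
    apply hEne α L
    rw [hlast]; linarith
  set q : Fin (n+1) → ℝ := fun α => ‖star w ⬝ᵥ ψ α‖ ^ 2 / (E α - r) with hq
  have hterm : ∀ α, (star w ⬝ᵥ ψ α) * (star (ψ α) ⬝ᵥ v L) = star (a L) * (q α : ℂ) := by
    intro α
    have hne : ((E α : ℂ) - r) ≠ 0 := by exact_mod_cast hEr α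
    have h := congrArg star (hrel α)
    rw [star_mul', star_mul', ← hstar] at h
    have h4 : star ((E α : ℂ) - r) = (E α : ℂ) - r := by simp
    rw [h4] at h
    have h5 : (star w ⬝ᵥ ψ α) * star (star w ⬝ᵥ ψ α) = ((‖star w ⬝ᵥ ψ α‖ ^ 2 : ℝ) : ℂ) := by
      have := Complex.mul_conj' (star w ⬝ᵥ ψ α)
      push_cast
      exact this
    simp only [hq]
    rw [Complex.ofReal_div, ← h5]
    push_cast
    field_simp
    linear_combination (star w ⬝ᵥ ψ α) * h
  have hsum : ∑ α, q α = 1 := by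
    have h := hone w (v L)
    rw [Finset.sum_congr rfl (fun α _ => hterm α), ← Finset.mul_sum, hstar, ← ha] at h
    have hne : star (a L) ≠ 0 := by simpa using han
    have h6 : (∑ α, (q α : ℂ)) = 1 := by
      apply mul_left_cancel₀ hne
      rw [← h, mul_one]
    exact_mod_cast h6
  have hapos : 0 < ‖a L‖ := norm_pos_iff.mpr han
  have hsq : Real.sqrt ε = ‖a L‖ := by rw [hε, Real.sqrt_sq hapos.le]
  have hδ : 0 < E L - r := by linarith
  have hqneg : ∀ α, α ≠ L → q α ≤ 0 := fun α h =>
    div_nonpos_of_nonneg_of_nonpos (by positivity) (by linarith [hEltr α h])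
  have hqpos : 0 ≤ q L := by simp only [hq]; positivity
  have habs : ∑ α, |q α| = 2 * q L - 1 := by
    have h7 : ∀ α, |q α| = (if α = L then 2 * q L else 0) - q α := by
      intro α
      by_cases h : α = L
      · subst h; rw [abs_of_nonneg hqpos]; simp; ring
      · rw [abs_of_nonpos (hqneg α h)]; simp [h]
    rw [Finset.sum_congr rfl (fun α _ => h7 α), Finset.sum_sub_distrib, hsum]
    simp
  have hbes : ‖star (v L) ⬝ᵥ ψ L‖ ^ 2 ≤ 1 := by
    have h := hone (v L) (v L)
    rw [hortho, if_pos rfl] at h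
    have h8 : ∀ α, (star (v L) ⬝ᵥ ψ α) * (star (ψ α) ⬝ᵥ v L)
        = ((‖star (v L) ⬝ᵥ ψ α‖ ^ 2 : ℝ) : ℂ) := by
      intro α
      rw [hstar (v L) (ψ α)]
      have := Complex.mul_conj' (star (v L) ⬝ᵥ ψ α)
      push_cast
      exact this
    rw [Finset.sum_congr rfl (fun α _ => h8 α)] at h
    have h9 : 1 = ∑ α, ‖star (v L) ⬝ᵥ ψ α‖ ^ 2 := by exact_mod_cast h
    rw [h9]
    exact Finset.single_le_sum (f := fun α => ‖star (v L) ⬝ᵥ ψ α‖ ^ 2)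
      (fun α _ => by positivity) (Finset.mem_univ L)
  have hqle : ‖a L‖ ^ 2 * q L ≤ E L - r := by
    have h := congrArg (fun z => ‖z‖ ^ 2) (hrel L)
    simp only [norm_mul, mul_pow] at h
    rw [← Complex.ofReal_sub, Complex.norm_real, Real.norm_eq_abs, sq_abs] at h
    have : ‖a L‖ ^ 2 * q L = (‖a L‖ ^ 2 * ‖star w ⬝ᵥ ψ L‖ ^ 2) / (E L - r) := by
      simp only [hq]; ring
    rw [this, ← h, div_le_iff₀ hδ]
    nlinarith [mul_le_mul_of_nonneg_left hbes (sq_nonneg (E L - r))]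
  have hamp : ‖star w ⬝ᵥ (NormedSpace.exp ((-(Complex.I * (t : ℂ))) • Hs)).mulVec (v L)‖
      ≤ ‖a L‖ * (2 * q L - 1) := by
    rw [hexp, hU, aux_sum, ← habs, Finset.mul_sum]
    refine (norm_sum_le _ _).trans (Finset.sum_le_sum fun α _ => ?_)
    rw [hterm, norm_mul, norm_mul, norm_star, Complex.norm_real, Real.norm_eq_abs]
    have : ‖Complex.exp (-(Complex.I * t) * E α)‖ = 1 := by
      rw [Complex.norm_exp]; simp
    rw [this, one_mul]
  refine hamp.trans ?_
  rw [hsq, hδp, le_sub_iff_add_le, le_div_iff₀ hapos]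
  nlinarith
end

section
/- Assume ε = |a_n|² > 0. Let 0 < r < S_1 and let δ satisfy 0 < δ < r·Δ and −ε/δ + Σ_{i=1}^{n−1} |a_i|²/(r(1−λ_i) − δ) = 1, where Δ = 1 − λ_{n−1}. Then δ < ε·r/(S_1 − r). -/
open Matrix BigOperators

/-- Assume `ε = |a_n|² > 0`. If `0 < r < S₁` and `δ` satisfies `0 < δ < r·Δ`
and `−ε/δ + ∑_{i<n} |a i|²/(r(1−λ i) − δ) = 1`, where `Δ = 1 − λ_{n−1}`, then
`δ < ε·r/(S₁ − r)`. -/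
theorem delta_minus_upper_bound
    (n : ℕ) (H : Matrix (Fin (n + 2)) (Fin (n + 2)) ℂ) (hH : H.IsHermitian)
    (v : Fin (n + 2) → (Fin (n + 2) → ℂ)) (lam : Fin (n + 2) → ℝ)
    (hlam : Monotone lam) (hlam0 : ∀ i, 0 ≤ lam i)
    (hlast : lam (Fin.last (n + 1)) = 1)
    (hlt : ∀ i, i ≠ Fin.last (n + 1) → lam i < 1)
    (hortho : ∀ i j, star (v i) ⬝ᵥ v j = if i = j then 1 else 0)
    (heig : ∀ i, H.mulVec (v i) = (lam i : ℂ) • v i)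
    (w : Fin (n + 2) → ℂ) (hw : star w ⬝ᵥ w = 1)
    (a : Fin (n + 2) → ℂ) (ha : ∀ i, a i = star (v i) ⬝ᵥ w)
    (ε : ℝ) (hε : ε = ‖a (Fin.last (n + 1))‖ ^ 2) (hε0 : 0 < ε)
    (S1 Δ : ℝ)
    (hS1 : S1 = ∑ i : Fin (n + 1), ‖a i.castSucc‖ ^ 2 / (1 - lam i.castSucc))
    (hΔ : Δ = 1 - lam ((Fin.last n).castSucc))
    (r : ℝ) (hr0 : 0 < r) (hr : r < S1)
    (δ : ℝ) (hδ0 : 0 < δ) (hδΔ : δ < r * Δ)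
    (heq : -ε / δ + ∑ i : Fin (n + 1),
        ‖a i.castSucc‖ ^ 2 / (r * (1 - lam i.castSucc) - δ) = 1) :
    δ < ε * r / (S1 - r) := by
  have hd : ∀ i : Fin (n + 1), 0 < r * (1 - lam i.castSucc) - δ := by
    intro i
    have h1 : lam i.castSucc ≤ lam (Fin.last n).castSucc :=
      hlam (Fin.castSucc_le_castSucc_iff.mpr (Fin.le_last i))
    rw [hΔ] at hδΔ
    nlinarith [mul_nonneg hr0.le (sub_nonneg.mpr h1)]
  have hle : ∀ i : Fin (n + 1), r * (1 - lam i.castSucc) - δ < r * (1 - lam i.castSucc) := by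
    intro i
    linarith
  have hS : S1 / r = ∑ i : Fin (n + 1), ‖a i.castSucc‖ ^ 2 / (r * (1 - lam i.castSucc)) := by
    rw [hS1, Finset.sum_div]
    refine Finset.sum_congr rfl fun i _ => ?_
    rw [div_div, mul_comm r]
  have hlt2 : S1 / r < ∑ i : Fin (n + 1),
      ‖a i.castSucc‖ ^ 2 / (r * (1 - lam i.castSucc) - δ) := by
    have hne : ∑ i : Fin (n + 1), ‖a i.castSucc‖ ^ 2 / (1 - lam i.castSucc) ≠ 0 := by
      rw [← hS1]
      linarith
    obtain ⟨j, -, hj⟩ := Finset.exists_ne_zero_of_sum_ne_zero hne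
    rw [hS]
    refine Finset.sum_lt_sum (fun i _ => ?_) ⟨j, Finset.mem_univ j, ?_⟩
    · exact div_le_div_of_nonneg_left (by positivity) (hd i) (hle i).le
    · have hc : 0 < ‖a j.castSucc‖ ^ 2 :=
        lt_of_le_of_ne (by positivity) (fun h => hj (by rw [← h, zero_div]))
      exact div_lt_div_of_pos_left hc (hd j) (hle j)
  have h3 : S1 / r < 1 + ε / δ := by
    rw [neg_div] at heq
    linarith
  have h4 : (1 + ε / δ) * (r * δ) = r * δ + ε * r := by
    field_simp
  have h5 : S1 / r * (r * δ) = S1 * δ := by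
    field_simp
  have h6 := mul_lt_mul_of_pos_right h3 (mul_pos hr0 hδ0)
  rw [lt_div_iff₀ (by linarith)]
  linarith
end

section
/- Assume λ_n = 1, a_n ≠ 0 with ε = |a_n|² < 1, and that H_search admits an orthonormal eigenbasis ψ_1,…,ψ_n with real eigenvalues E_1,…,E_n such that E_α ≠ r·λ_i for all α and i. If r > S_1, then for every t ∈ ℝ, |⟨w, exp(−i t H_search) v_n⟩| ≤ 2√ε·r/(r − S_1). -/
open Matrix BigOperators

lemma aux_complete {m : ℕ} (v : Fin m → (Fin m → ℂ))
    (h : ∀ i j, star (v i) ⬝ᵥ v j = if i = j then 1 else 0) :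
    (Matrix.of (fun i j => v j i))ᴴ * (Matrix.of (fun i j => v j i)) = 1 ∧
    (Matrix.of (fun i j => v j i)) * (Matrix.of (fun i j => v j i))ᴴ = 1 := by
  have h1 : (Matrix.of (fun i j => v j i))ᴴ * (Matrix.of (fun i j => v j i)) = 1 := by
    ext i j
    have := h i j
    simpa [Matrix.mul_apply, dotProduct, Matrix.one_apply] using this
  exact ⟨h1, mul_eq_one_comm.mp h1⟩

lemma aux_parseval {m : ℕ} (v : Fin m → (Fin m → ℂ))
    (h : ∀ i j, star (v i) ⬝ᵥ v j = if i = j then 1 else 0) (x y : Fin m → ℂ) :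
    x ⬝ᵥ y = ∑ i, (x ⬝ᵥ v i) * (star (v i) ⬝ᵥ y) := by
  have h2 := (aux_complete v h).2
  set U : Matrix (Fin m) (Fin m) ℂ := Matrix.of (fun i j => v j i) with hU
  have : x ⬝ᵥ y = (x ᵥ* U) ⬝ᵥ (Uᴴ *ᵥ y) := by
    rw [Matrix.dotProduct_mulVec, Matrix.vecMul_vecMul, h2, Matrix.vecMul_one]
  rw [this]
  simp [dotProduct, Matrix.vecMul, Matrix.mulVec, hU]

lemma aux_exp {m : ℕ} (A : Matrix (Fin m) (Fin m) ℂ) (ψ : Fin m → (Fin m → ℂ)) (E : Fin m → ℂ)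
    (h : ∀ i j, star (ψ i) ⬝ᵥ ψ j = if i = j then 1 else 0)
    (hE : ∀ α, A.mulVec (ψ α) = E α • ψ α) (α : Fin m) :
    (NormedSpace.exp A).mulVec (ψ α) = Complex.exp (E α) • ψ α := by
  obtain ⟨h1, h2⟩ := aux_complete ψ h
  set U : Matrix (Fin m) (Fin m) ℂ := Matrix.of (fun i j => ψ j i) with hU
  have hu : IsUnit U := IsUnit.of_mul_eq_one _ h2
  have hinv : U⁻¹ = Uᴴ := Matrix.inv_eq_right_inv h2
  have hAU : A * U = U * Matrix.diagonal E := by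
    ext i j
    have := congrFun (hE j) i
    rw [Matrix.mul_diagonal]
    simpa [Matrix.mul_apply, Matrix.mulVec, dotProduct, hU, mul_comm] using this
  have hA : A = U * Matrix.diagonal E * U⁻¹ := by
    rw [← hAU, hinv, Matrix.mul_assoc, h2, Matrix.mul_one]
  have hexp : NormedSpace.exp A * U = U * Matrix.diagonal (NormedSpace.exp E) := by
    rw [hA, Matrix.exp_conj _ _ hu, Matrix.exp_diagonal, hinv, Matrix.mul_assoc, h1, Matrix.mul_one]
  ext i
  have := congrFun (congrFun hexp i) α
  rw [Matrix.mul_diagonal] at this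
  have h3 : NormedSpace.exp E α = Complex.exp (E α) := by
    rw [Pi.coe_exp, Complex.exp_eq_exp_ℂ]
  rw [h3] at this
  simpa [Matrix.mul_apply, Matrix.mulVec, dotProduct, hU, mul_comm] using this

lemma aux_sum_s12 {m : ℕ} (x : Fin m → ℝ) (K : ℝ) (hK : 0 ≤ K) (hx : ∀ i, x i ≤ K)
    (hone : ∀ i j, 0 < x i → 0 < x j → i = j) (hs : ∑ i, x i = 1) :
    ∑ i, |x i| ≤ 2 * K := by
  have h1 : ∀ i, |x i| = 2 * max (x i) 0 - x i := by
    intro i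
    rcases le_total 0 (x i) with h | h
    · rw [abs_of_nonneg h, max_eq_left h]; ring
    · rw [abs_of_nonpos h, max_eq_right h]; ring
  have h2 : ∑ i, max (x i) 0 ≤ K := by
    by_cases h : ∃ i, 0 < x i
    · obtain ⟨i, hi⟩ := h
      rw [Finset.sum_eq_single i]
      · exact max_le (hx i) hK
      · intro j _ hj
        apply max_eq_right
        by_contra hc
        exact hj (hone j i (not_le.mp hc) hi)
      · simp
    · push Not at h
      rw [Finset.sum_eq_zero]
      · exact hK
      · intro i _; exact max_eq_right (h i)
  simp_rw [h1]
  rw [Finset.sum_sub_distrib, ← Finset.mul_sum, hs]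
  linarith



/-- Assume `λ_n = 1`, `a_n ≠ 0` with `ε = |a_n|² < 1`, and that
`H_search = r•H + |w⟩⟨w|` admits an orthonormal eigenbasis `ψ` with real eigenvalues `E` such
that `E α ≠ r·λ i` for all `α, i`. If `r > S₁`, then for every `t ∈ ℝ`,
`|⟨w, exp(−i t H_search) v_n⟩| ≤ 2√ε·r/(r − S₁)`. -/
theorem amplitude_bound_large_r
    (n : ℕ) (H : Matrix (Fin (n + 1)) (Fin (n + 1)) ℂ) (hH : H.IsHermitian)
    (v : Fin (n + 1) → (Fin (n + 1) → ℂ)) (lam : Fin (n + 1) → ℝ)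
    (hlam : Monotone lam) (hlam0 : ∀ i, 0 ≤ lam i)
    (hlast : lam (Fin.last n) = 1)
    (hlt : ∀ i, i ≠ Fin.last n → lam i < 1)
    (hortho : ∀ i j, star (v i) ⬝ᵥ v j = if i = j then 1 else 0)
    (heig : ∀ i, H.mulVec (v i) = (lam i : ℂ) • v i)
    (w : Fin (n + 1) → ℂ) (hw : star w ⬝ᵥ w = 1)
    (a : Fin (n + 1) → ℂ) (ha : ∀ i, a i = star (v i) ⬝ᵥ w)
    (han : a (Fin.last n) ≠ 0)
    (ε : ℝ) (hε : ε = ‖a (Fin.last n)‖ ^ 2) (hε1 : ε < 1)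
    (S1 : ℝ)
    (hS1 : S1 = ∑ i : Fin n, ‖a i.castSucc‖ ^ 2 / (1 - lam i.castSucc))
    (r : ℝ) (hr : S1 < r)
    (Hs : Matrix (Fin (n + 1)) (Fin (n + 1)) ℂ)
    (hHs : Hs = (r : ℂ) • H + Matrix.vecMulVec w (star w))
    (ψ : Fin (n + 1) → (Fin (n + 1) → ℂ)) (E : Fin (n + 1) → ℝ)
    (horthoψ : ∀ α β, star (ψ α) ⬝ᵥ ψ β = if α = β then 1 else 0)
    (heigψ : ∀ α, Hs.mulVec (ψ α) = (E α : ℂ) • ψ α)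
    (hEne : ∀ α i, E α ≠ r * lam i) :
    ∀ t : ℝ,
      ‖star w ⬝ᵥ (NormedSpace.exp ((-(Complex.I * (t : ℂ))) • Hs)).mulVec (v (Fin.last n))‖ ≤
        2 * Real.sqrt ε * r / (r - S1) := by

  intro t
  have hs1 : 0 ≤ S1 := by
    rw [hS1]
    refine Finset.sum_nonneg fun i _ => div_nonneg (by positivity) ?_
    have := hlt i.castSucc (Fin.castSucc_lt_last i).ne
    linarith
  have hr0 : 0 < r := lt_of_le_of_lt hs1 hr
  have hεpos : 0 < ε := by rw [hε]; positivity
  have hle1 : ∀ i, lam i ≤ 1 := fun i => by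
    rw [← hlast]; exact hlam (Fin.le_last i)
  set c : Fin (n + 1) → ℂ := fun α => star w ⬝ᵥ ψ α with hc
  -- components of eigenvectors
  have hcomp : ∀ α i, star (v i) ⬝ᵥ ψ α = a i * c α / ((E α - r * lam i : ℝ) : ℂ) := by
    intro α i
    have hne : ((E α - r * lam i : ℝ) : ℂ) ≠ 0 := by
      exact_mod_cast sub_ne_zero.mpr (hEne α i)
    rw [eq_div_iff hne]
    have h1 := congrArg (fun x => star (v i) ⬝ᵥ x) (heigψ α)
    have h2 : star (v i) ⬝ᵥ H *ᵥ ψ α = lam i * (star (v i) ⬝ᵥ ψ α) := by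
      rw [Matrix.dotProduct_mulVec]
      have : star (v i) ᵥ* H = (lam i : ℂ) • star (v i) := by
        have h3 := congrArg star (heig i)
        rw [Matrix.star_mulVec, hH.eq] at h3
        rw [h3]
        ext k
        simp
      rw [this, smul_dotProduct, smul_eq_mul]
    have h4 : Matrix.vecMulVec w (star w) *ᵥ ψ α = c α • w := by
      rw [Matrix.vecMulVec_mulVec]
      ext k; simp [hc, mul_comm]
    simp only [hHs, Matrix.add_mulVec, Matrix.smul_mulVec, dotProduct_add, dotProduct_smul, h2, h4,
      smul_eq_mul, ← ha] at h1
    push_cast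
    linear_combination -h1
  have hstar : ∀ x y : Fin (n+1) → ℂ, star x ⬝ᵥ y = star (star y ⬝ᵥ x) := by
    intro x y
    rw [Matrix.star_dotProduct]
  have hwv : ∀ i, star w ⬝ᵥ v i = star (a i) := by
    intro i; rw [hstar, ← ha]
  have hψv : ∀ α i, star (ψ α) ⬝ᵥ v i = star (a i) * star (c α) / ((E α - r * lam i : ℝ) : ℂ) := by
    intro α i
    rw [hstar, hcomp]
    simp
  -- eigenvector inner products
  have hinner : ∀ α β, (if α = β then (1:ℂ) else 0) = star (c α) * c β *
      ((∑ i, ‖a i‖ ^ 2 / ((E α - r * lam i) * (E β - r * lam i)) : ℝ) : ℂ) := by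
    intro α β
    rw [← horthoψ α β, aux_parseval v hortho]
    push_cast
    rw [Finset.mul_sum]
    refine Finset.sum_congr rfl fun i _ => ?_
    rw [hψv, hcomp]
    have : ((‖a i‖ : ℝ) : ℂ) ^ 2 = star (a i) * a i := by
      rw [Complex.star_def, Complex.conj_mul']
    rw [this]
    push_cast
    simp only [div_eq_mul_inv, mul_inv]
    ring
  have hcne : ∀ α, c α ≠ 0 := by
    intro α h0
    have := hinner α α
    simp [h0] at this
  have hsec : ∀ α, ∑ i, ‖a i‖ ^ 2 / (E α - r * lam i) = 1 := by
    intro α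
    have h1 : c α = c α * ((∑ i, ‖a i‖ ^ 2 / (E α - r * lam i) : ℝ) : ℂ) := by
      conv_lhs => rw [hc]
      simp only
      rw [aux_parseval v hortho]
      push_cast
      rw [Finset.mul_sum]
      refine Finset.sum_congr rfl fun i _ => ?_
      rw [hwv, hcomp]
      have : ((‖a i‖ : ℝ) : ℂ) ^ 2 = star (a i) * a i := by
        rw [Complex.star_def, Complex.conj_mul']
      rw [this]
      push_cast
      ring
    have h2 := mul_left_cancel₀ (hcne α) ((mul_one _).trans h1)
    exact_mod_cast h2.symm
  set x : Fin (n+1) → ℝ := fun α => ‖c α‖ ^ 2 / (E α - r) with hx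
  have hpos : ∀ α, 0 < x α → r < E α := by
    intro α h
    by_contra hcon
    have : x α ≤ 0 := div_nonpos_of_nonneg_of_nonpos (by positivity) (by linarith)
    linarith
  have hgap : ∀ α i, r < E α → r * (1 - lam i) < E α - r * lam i := by
    intro α i h; linarith
  have hgap' : ∀ α i, r < E α → 0 < E α - r * lam i := by
    intro α i h
    have := hgap α i h
    have := mul_nonneg hr0.le (sub_nonneg.mpr (hle1 i))
    linarith
  have hone : ∀ α β, 0 < x α → 0 < x β → α = β := by
    intro α β hα hβ
    by_contra hne
    have h := hinner α β
    rw [if_neg hne] at h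
    have hS : 0 < ∑ i, ‖a i‖ ^ 2 / ((E α - r * lam i) * (E β - r * lam i)) := by
      refine Finset.sum_pos' (fun i _ => ?_) ⟨Fin.last n, Finset.mem_univ _, ?_⟩
      · have := hgap' α i (hpos α hα)
        have := hgap' β i (hpos β hβ)
        positivity
      · have := hgap' α (Fin.last n) (hpos α hα)
        have := hgap' β (Fin.last n) (hpos β hβ)
        positivity
    have h3 : ((∑ i, ‖a i‖ ^ 2 / ((E α - r * lam i) * (E β - r * lam i)) : ℝ) : ℂ) ≠ 0 := by
      exact_mod_cast hS.ne'
    exact (mul_ne_zero (mul_ne_zero (star_ne_zero.mpr (hcne α)) (hcne β)) h3) h.symm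
  have hK : 0 ≤ r / (r - S1) := div_nonneg hr0.le (by linarith)
  have hxK : ∀ α, x α ≤ r / (r - S1) := by
    intro α
    rcases le_or_gt (x α) 0 with h | h
    · linarith
    have hE := hpos α h
    have hδ : 0 < E α - r := by linarith
    -- normalization
    have hnorm : ‖c α‖ ^ 2 * (∑ i, ‖a i‖ ^ 2 / ((E α - r * lam i) * (E α - r * lam i))) = 1 := by
      have h1 := hinner α α
      rw [if_pos rfl, Complex.star_def, Complex.conj_mul'] at h1
      exact_mod_cast h1.symm
    have hlow : ε / ((E α - r) * (E α - r)) ≤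
        ∑ i, ‖a i‖ ^ 2 / ((E α - r * lam i) * (E α - r * lam i)) := by
      have := Finset.single_le_sum (f := fun i => ‖a i‖ ^ 2 / ((E α - r * lam i) * (E α - r * lam i)))
        (fun i _ => by have := hgap' α i hE; positivity) (Finset.mem_univ (Fin.last n))
      simpa [hlast, hε] using this
    have h5 : ‖c α‖ ^ 2 * (ε / ((E α - r) * (E α - r))) ≤ 1 := by
      rw [← hnorm]; gcongr
    -- secular equation
    have h6 : 1 ≤ ε / (E α - r) + S1 / r := by
      rw [← hsec α, Fin.sum_univ_castSucc, hlast, mul_one, ← hε, add_comm, hS1, Finset.sum_div]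
      refine add_le_add le_rfl (Finset.sum_le_sum fun i _ => ?_)
      rw [div_div]
      have hl := hlt i.castSucc (Fin.castSucc_lt_last i).ne
      have : 0 < (1 - lam i.castSucc) * r := mul_pos (by linarith) hr0
      refine div_le_div_of_nonneg_left (by positivity) this ?_
      have := hgap α i.castSucc hE
      linarith
    have h7 : x α * (ε / (E α - r)) ≤ 1 := by
      refine le_trans (le_of_eq ?_) h5
      simp only [hx]
      field_simp
    have h8 : x α * ((r - S1) / r) ≤ 1 := by
      refine le_trans (mul_le_mul_of_nonneg_left ?_ h.le) h7
      rw [sub_div, div_self hr0.ne']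
      linarith
    rw [le_div_iff₀ (by linarith)]
    rw [mul_div_assoc', div_le_one hr0] at h8
    exact h8
  have hxsum : ∑ α, x α = 1 := by
    have h1 : star (a (Fin.last n)) = star (a (Fin.last n)) * ((∑ α, x α : ℝ) : ℂ) := by
      conv_lhs => rw [← hwv, aux_parseval ψ horthoψ]
      push_cast
      rw [Finset.mul_sum]
      refine Finset.sum_congr rfl fun α _ => ?_
      rw [hψv, hlast]
      have : ((‖c α‖ : ℝ) : ℂ) ^ 2 = star (c α) * c α := by
        rw [Complex.star_def, Complex.conj_mul']
      simp only [hx]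
      push_cast
      rw [this]
      simp only [hc]
      ring
    have h2 := mul_left_cancel₀ (star_ne_zero.mpr han) ((mul_one _).trans h1)
    exact_mod_cast h2.symm
  have hfin := aux_sum_s12 x _ hK hxK hone hxsum
  -- the exponential
  set A := (-(Complex.I * (t : ℂ))) • Hs with hA
  have hexp : ∀ α, (NormedSpace.exp A).mulVec (ψ α) =
      Complex.exp (-(Complex.I * (t : ℂ)) * E α) • ψ α := by
    refine aux_exp A ψ (fun α => -(Complex.I * (t : ℂ)) * E α) horthoψ ?_
    intro α
    rw [hA, Matrix.smul_mulVec, heigψ, smul_smul]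
  have hmain : star w ⬝ᵥ (NormedSpace.exp A).mulVec (v (Fin.last n)) =
      ∑ α, Complex.exp (-(Complex.I * (t : ℂ)) * E α) * (star (a (Fin.last n)) * (x α : ℂ)) := by
    rw [Matrix.dotProduct_mulVec, aux_parseval ψ horthoψ]
    refine Finset.sum_congr rfl fun α _ => ?_
    rw [← Matrix.dotProduct_mulVec, hexp, dotProduct_smul, hψv, hlast, smul_eq_mul]
    have : ((‖c α‖ : ℝ) : ℂ) ^ 2 = star (c α) * c α := by
      rw [Complex.star_def, Complex.conj_mul']
    simp only [hx]
    push_cast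
    rw [this]
    simp only [hc]
    ring
  have hsq : Real.sqrt ε = ‖a (Fin.last n)‖ := by
    rw [hε, Real.sqrt_sq (norm_nonneg _)]
  rw [hmain]
  calc _ ≤ ∑ α, ‖Complex.exp (-(Complex.I * (t : ℂ)) * E α) * (star (a (Fin.last n)) * (x α : ℂ))‖ :=
        norm_sum_le _ _
    _ = ∑ α, ‖a (Fin.last n)‖ * |x α| := by
        refine Finset.sum_congr rfl fun α _ => ?_
        have : ‖Complex.exp (-(Complex.I * (t : ℂ)) * E α)‖ = 1 := by
          rw [Complex.norm_exp]; simp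
        rw [norm_mul, this, one_mul, norm_mul, norm_star, Complex.norm_real, Real.norm_eq_abs]
    _ = Real.sqrt ε * ∑ α, |x α| := by rw [← Finset.mul_sum, hsq]
    _ ≤ Real.sqrt ε * (2 * (r / (r - S1))) := by gcongr
    _ = _ := by ring
end

section
/- Assume ε = |a_n|² < 1 (so S_1 > 0). Then for every real δ with 0 < |δ| < S_1·Δ, the Taylor-remainder bound |Σ_{i=1}^{n−1} |a_i|²/(S_1(1−λ_i) + δ) − 1 + S_2·δ/S_1²| ≤ S_3·δ²/(S_1³·(1 − |δ|/(S_1·Δ))) holds. -/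
open Matrix BigOperators

theorem aux_term (c x S D d : ℝ) (hc : 0 ≤ c) (hD : 0 < D) (hx : D ≤ x) (hS : 0 < S)
    (hd : |d| < S * D) :
    |c / (S * x + d) - c / x / S + c / x ^ 2 * d / S ^ 2| ≤
      c / x ^ 3 * d ^ 2 / (S ^ 3 * (1 - |d| / (S * D))) := by
  have hx0 : 0 < x := lt_of_lt_of_le hD hx
  have hSD : 0 < S * D := by positivity
  have hq : 0 < 1 - |d| / (S * D) := by
    rw [sub_pos, div_lt_one hSD]; exact hd
  have hkey : S * x * (1 - |d| / (S * D)) ≤ S * x + d := by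
    have h1 : |d| ≤ S * x * (|d| / (S * D)) := by
      have h2 : S * x * (|d| / (S * D)) = |d| * (x / D) := by field_simp
      rw [h2]
      exact le_mul_of_one_le_right (abs_nonneg d) ((one_le_div hD).2 hx)
    have h3 := neg_abs_le d
    linarith
  have hpos0 : 0 < S * x * (1 - |d| / (S * D)) := by positivity
  have hpos : 0 < S * x + d := lt_of_lt_of_le hpos0 hkey
  have e : c / (S * x + d) - c / x / S + c / x ^ 2 * d / S ^ 2
      = c * d ^ 2 / (S ^ 2 * x ^ 2 * (S * x + d)) := by
    have := hpos.ne'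
    field_simp
    ring
  have e2 : c / x ^ 3 * d ^ 2 / (S ^ 3 * (1 - |d| / (S * D)))
      = c * d ^ 2 / (S ^ 2 * x ^ 2 * (S * x * (1 - |d| / (S * D)))) := by
    generalize 1 - |d| / (S * D) = q at *
    field_simp
  rw [e, e2, abs_of_nonneg (by positivity)]
  gcongr

/-- Assume `ε = |a_n|² < 1` (so `S₁ > 0`). Then for every real `δ` with
`0 < |δ| < S₁·Δ`, the Taylor-remainder bound
`|∑_{i<n} |a i|²/(S₁(1−λ i) + δ) − 1 + S₂·δ/S₁²| ≤ S₃·δ²/(S₁³·(1 − |δ|/(S₁·Δ)))` holds. -/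
theorem taylor_remainder_bound
    (n : ℕ) (H : Matrix (Fin (n + 2)) (Fin (n + 2)) ℂ) (hH : H.IsHermitian)
    (v : Fin (n + 2) → (Fin (n + 2) → ℂ)) (lam : Fin (n + 2) → ℝ)
    (hlam : Monotone lam) (hlam0 : ∀ i, 0 ≤ lam i)
    (hlast : lam (Fin.last (n + 1)) = 1)
    (hlt : ∀ i, i ≠ Fin.last (n + 1) → lam i < 1)
    (hortho : ∀ i j, star (v i) ⬝ᵥ v j = if i = j then 1 else 0)
    (heig : ∀ i, H.mulVec (v i) = (lam i : ℂ) • v i)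
    (w : Fin (n + 2) → ℂ) (hw : star w ⬝ᵥ w = 1)
    (a : Fin (n + 2) → ℂ) (ha : ∀ i, a i = star (v i) ⬝ᵥ w)
    (ε : ℝ) (hε : ε = ‖a (Fin.last (n + 1))‖ ^ 2) (hε1 : ε < 1)
    (Δ S1 S2 S3 : ℝ)
    (hΔ : Δ = 1 - lam ((Fin.last n).castSucc))
    (hS1 : S1 = ∑ i : Fin (n + 1), ‖a i.castSucc‖ ^ 2 / (1 - lam i.castSucc))
    (hS2 : S2 = ∑ i : Fin (n + 1), ‖a i.castSucc‖ ^ 2 / (1 - lam i.castSucc) ^ 2)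
    (hS3 : S3 = ∑ i : Fin (n + 1), ‖a i.castSucc‖ ^ 2 / (1 - lam i.castSucc) ^ 3) :
    ∀ δ : ℝ, 0 < |δ| → |δ| < S1 * Δ →
      |(∑ i : Fin (n + 1), ‖a i.castSucc‖ ^ 2 / (S1 * (1 - lam i.castSucc) + δ)) - 1 +
          S2 * δ / S1 ^ 2| ≤
        S3 * δ ^ 2 / (S1 ^ 3 * (1 - |δ| / (S1 * Δ))) := by
  intro δ _ hδ
  have hne : ∀ i : Fin (n + 1), i.castSucc ≠ Fin.last (n + 1) := fun i => Fin.castSucc_ne_last i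
  have hD : 0 < Δ := by
    rw [hΔ]; exact sub_pos.2 (hlt _ (hne _))
  have hS : 0 < S1 := pos_of_mul_pos_left (lt_of_le_of_lt (abs_nonneg δ) hδ) hD.le
  have hx : ∀ i : Fin (n + 1), Δ ≤ 1 - lam i.castSucc := by
    intro i
    rw [hΔ]
    have : lam i.castSucc ≤ lam (Fin.last n).castSucc :=
      hlam (Fin.castSucc_le_castSucc_iff.2 (Fin.le_last i))
    linarith
  have h1 : (1 : ℝ) = ∑ i : Fin (n + 1), ‖a i.castSucc‖ ^ 2 / (1 - lam i.castSucc) / S1 := by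
    rw [← Finset.sum_div, ← hS1, div_self hS.ne']
  have hL : (∑ i : Fin (n + 1), ‖a i.castSucc‖ ^ 2 / (S1 * (1 - lam i.castSucc) + δ)) - 1 +
          S2 * δ / S1 ^ 2 = ∑ i : Fin (n + 1),
        (‖a i.castSucc‖ ^ 2 / (S1 * (1 - lam i.castSucc) + δ)
          - ‖a i.castSucc‖ ^ 2 / (1 - lam i.castSucc) / S1
          + ‖a i.castSucc‖ ^ 2 / (1 - lam i.castSucc) ^ 2 * δ / S1 ^ 2) := by
    rw [Finset.sum_add_distrib, Finset.sum_sub_distrib, ← h1, ← Finset.sum_div,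
      ← Finset.sum_mul, ← hS2]
  rw [hL, hS3, Finset.sum_mul, Finset.sum_div]
  exact (Finset.abs_sum_le_sum_abs _ _).trans (Finset.sum_le_sum fun i _ =>
    aux_term _ _ _ _ _ (by positivity) hD (hx i) hS hδ)
end

section
/- There exists a constant c > 0 such that the following holds. For every n ≥ 2, every reals 0 ≤ λ_1 ≤ … ≤ λ_{n−1} < λ_n = 1 and complex numbers a_1,…,a_n with Σ_{i=1}^n |a_i|² = 1 and ε := |a_n|² > 0, define Δ = 1 − λ_{n−1}, S_k = Σ_{i=1}^{n−1} |a_i|²/(1−λ_i)^k, δ₀ = √ε·S_1/√S_2 and η = √ε·S_3/S_2^{3/2}. If the spectral condition √ε ≤ c·min{S_1·S_2/S_3, Δ·√S_2} holds, then the equation ε/δ + Σ_{i=1}^{n−1} |a_i|²/(S_1(1−λ_i) + δ) = 1 has a solution δ₊ in the interval [(1−η)δ₀, (1+η)δ₀] and a solution δ₋ in the interval [−(1+η)δ₀, −(1−η)δ₀] (so that, with r = S_1, both S_1 + δ₊ and S_1 + δ₋ are eigenvalues of H_search). -/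
open BigOperators

lemma secular_conv {ι : Type*} [Fintype ι] (p x : ι → ℝ) (S1 S2 q t : ℝ)
    (hS1 : S1 = ∑ i, p i / x i) (hS2 : S2 = ∑ i, p i / x i ^ 2)
    (hx : ∀ i, 0 < x i) (hxt : ∀ i, 0 < x i + q * t) (h1 : 0 < S1) (hq : 0 < q) (ht : t ≠ 0)
    (hg : S2 * (1 - t ^ 2) + q * t ^ 3 * ∑ i, p i / (x i ^ 2 * (x i + q * t)) = 0) :
    q ^ 2 * S2 / (q * S1 * t) + ∑ i, p i / (S1 * x i + q * S1 * t) = 1 := by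
  have key : ∑ i, p i / (S1 * x i + q * S1 * t) =
      (1 / S1) * (S1 - q * t * S2 + q ^ 2 * t ^ 2 * ∑ i, p i / (x i ^ 2 * (x i + q * t))) := by
    conv_rhs => rw [hS2]; enter [2, 1, 1]; rw [hS1]
    rw [Finset.mul_sum, Finset.mul_sum, ← Finset.sum_sub_distrib, ← Finset.sum_add_distrib,
      Finset.mul_sum]
    refine Finset.sum_congr rfl fun i _ => ?_
    have a := (hx i).ne'
    have b := (hxt i).ne'
    have e : S1 * x i + q * S1 * t = S1 * (x i + q * t) := by ring
    rw [e]
    field_simp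
    ring
  rw [key]
  set T := ∑ i, p i / (x i ^ 2 * (x i + q * t))
  field_simp
  linear_combination q * hg

lemma secular_core {ι : Type*} [Fintype ι] (p x : ι → ℝ) (S1 S2 S3 q η D : ℝ)
    (hp : ∀ i, 0 ≤ p i)
    (hS1 : S1 = ∑ i, p i / x i) (hS2 : S2 = ∑ i, p i / x i ^ 2) (hS3 : S3 = ∑ i, p i / x i ^ 3)
    (hD : 0 < D) (hx : ∀ i, D ≤ x i) (h1 : 0 < S1) (h2 : 0 < S2) (hq : 0 < q)
    (hqD : q ≤ D / 10) (hη : η * S2 = q * S3) (hη0 : 0 ≤ η) (hη1 : η ≤ 1 / 10) :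
    (∃ t, 1 ≤ t ∧ t ≤ 1 + η ∧
      q ^ 2 * S2 / (q * S1 * t) + ∑ i, p i / (S1 * x i + q * S1 * t) = 1) ∧
    (∃ t, -1 ≤ t ∧ t ≤ -(1 - η) ∧
      q ^ 2 * S2 / (q * S1 * t) + ∑ i, p i / (S1 * x i + q * S1 * t) = 1) := by
  have hx0 : ∀ i, 0 < x i := fun i => hD.trans_le (hx i)
  have hpos : ∀ t, -1 ≤ t → ∀ i, 9 / 10 * x i ≤ x i + q * t := fun t ht i => by
    have := hx i
    nlinarith
  have hpos' : ∀ t, -1 ≤ t → ∀ i, 0 < x i + q * t := fun t ht i => by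
    have := hpos t ht i
    have := hx0 i
    linarith
  set T : ℝ → ℝ := fun t => ∑ i, p i / (x i ^ 2 * (x i + q * t)) with hT
  have T0 : ∀ t, -1 ≤ t → 0 ≤ T t := fun t ht => Finset.sum_nonneg fun i _ =>
    div_nonneg (hp i) (mul_nonneg (sq_nonneg _) (hpos' t ht i).le)
  have T1 : ∀ t, -1 ≤ t → T t ≤ 10 / 9 * S3 := fun t ht => by
    rw [hS3, Finset.mul_sum]
    refine Finset.sum_le_sum fun i _ => ?_
    have a := hx0 i
    have e : 10 / 9 * (p i / x i ^ 3) = p i / (x i ^ 2 * (9 / 10 * x i)) := by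
      field_simp
    rw [e]
    exact div_le_div_of_nonneg_left (hp i) (by positivity)
      (mul_le_mul_of_nonneg_left (hpos t ht i) (sq_nonneg _))
  set g : ℝ → ℝ := fun t => S2 * (1 - t ^ 2) + q * t ^ 3 * T t with hg
  have hc : ∀ u v, -1 ≤ u → ContinuousOn g (Set.Icc u v) := fun u v hu => by
    have : ContinuousOn T (Set.Icc u v) := by
      refine continuousOn_finsetSum _ fun i _ => ?_
      refine ContinuousOn.div (by fun_prop) (by fun_prop) fun t ht => ?_
      have a := hx0 i
      have b := hpos' t (hu.trans ht.1) i
      positivity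
    fun_prop
  constructor
  · obtain ⟨t, ht, h⟩ := intermediate_value_Icc' (by linarith : (1:ℝ) ≤ 1 + η) (hc 1 (1 + η) (by norm_num))
      (show (0:ℝ) ∈ Set.Icc _ _ from ⟨by
        have h := mul_le_mul_of_nonneg_left (T1 (1 + η) (by linarith)) hq.le
        have h' : q * T (1 + η) ≤ 10 / 9 * (η * S2) := by rw [hη]; linarith
        have hcube : (1 + η) ^ 3 ≤ 3 / 2 := by
          have := pow_le_pow_left₀ (by linarith : (0:ℝ) ≤ 1 + η) (by linarith : 1 + η ≤ 11 / 10) 3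
          linarith
        have hqT : 0 ≤ q * T (1 + η) := mul_nonneg hq.le (T0 _ (by linarith))
        have k : (1 + η) ^ 3 * (q * T (1 + η)) ≤ 3 / 2 * (10 / 9 * (η * S2)) :=
          mul_le_mul hcube h' hqT (by norm_num)
        have := mul_nonneg hη0 h2.le
        have := mul_nonneg hη0 this
        simp only [hg]
        nlinarith, by
        have := T0 1 (by norm_num)
        simp only [hg]
        have := mul_nonneg hq.le this
        linarith⟩)
    refine ⟨t, ht.1, ht.2, ?_⟩
    exact secular_conv p x S1 S2 q t hS1 hS2 hx0 (hpos' t (by linarith [ht.1])) h1 hq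
      (by linarith [ht.1]) h
  · obtain ⟨t, ht, h⟩ := intermediate_value_Icc (by linarith : (-1:ℝ) ≤ -(1 - η)) (hc (-1) (-(1 - η)) le_rfl)
      (show (0:ℝ) ∈ Set.Icc _ _ from ⟨by
        have := T0 (-1) le_rfl
        simp only [hg]
        have := mul_nonneg hq.le this
        linarith, by
        have h := mul_le_mul_of_nonneg_left (T1 (-(1 - η)) (by linarith)) hq.le
        have h' : q * T (-(1 - η)) ≤ 10 / 9 * (η * S2) := by rw [hη]; linarith
        have hcube : (1 - η) ^ 3 ≤ 1 := pow_le_one₀ (by linarith) (by linarith)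
        have hqT : 0 ≤ q * T (-(1 - η)) := mul_nonneg hq.le (T0 _ (by linarith))
        have k : (1 - η) ^ 3 * (q * T (-(1 - η))) ≤ 1 * (10 / 9 * (η * S2)) :=
          mul_le_mul hcube h' hqT (by norm_num)
        have := mul_nonneg hη0 h2.le
        have := mul_le_mul_of_nonneg_right hη1 this
        simp only [hg]
        nlinarith⟩)
    refine ⟨t, ht.1, ht.2, ?_⟩
    exact secular_conv p x S1 S2 q t hS1 hS2 hx0 (hpos' t ht.1) h1 hq
      (by linarith [ht.2]) h

/-- There exists `c > 0` such that, for every `n ≥ 2` (dimension `n + 2`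
here), all reals `0 ≤ λ_1 ≤ … ≤ λ_{n−1} < λ_n = 1` and complex `a` with `∑ |a i|² = 1` and
`ε = |a_n|² > 0`, setting `Δ = 1 − λ_{n−1}`, `S_k = ∑_{i<n} |a i|²/(1−λ i)^k`,
`δ₀ = √ε·S₁/√S₂` and `η = √ε·S₃/S₂^{3/2}`: if `√ε ≤ c·min(S₁S₂/S₃, Δ√S₂)`, then the secular
equation `ε/δ + ∑_{i<n} |a i|²/(S₁(1−λ i) + δ) = 1` has a solution `δ₊ ∈ [(1−η)δ₀, (1+η)δ₀]`
and a solution `δ₋ ∈ [−(1+η)δ₀, −(1−η)δ₀]`. -/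
theorem exists_secular_solutions_near_delta0 :
    ∃ c : ℝ, 0 < c ∧
      ∀ (n : ℕ) (lam : Fin (n + 2) → ℝ) (a : Fin (n + 2) → ℂ),
        Monotone lam → (∀ i, 0 ≤ lam i) →
        lam ((Fin.last n).castSucc) < 1 → lam (Fin.last (n + 1)) = 1 →
        (∑ i, ‖a i‖ ^ 2) = 1 →
        ∀ ε Δ S1 S2 S3 δ0 η : ℝ,
          ε = ‖a (Fin.last (n + 1))‖ ^ 2 → 0 < ε →
          Δ = 1 - lam ((Fin.last n).castSucc) →
          S1 = (∑ i : Fin (n + 1), ‖a i.castSucc‖ ^ 2 / (1 - lam i.castSucc)) →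
          S2 = (∑ i : Fin (n + 1), ‖a i.castSucc‖ ^ 2 / (1 - lam i.castSucc) ^ 2) →
          S3 = (∑ i : Fin (n + 1), ‖a i.castSucc‖ ^ 2 / (1 - lam i.castSucc) ^ 3) →
          δ0 = Real.sqrt ε * S1 / Real.sqrt S2 →
          η = Real.sqrt ε * S3 / (S2 * Real.sqrt S2) →
          Real.sqrt ε ≤ c * min (S1 * S2 / S3) (Δ * Real.sqrt S2) →
          (∃ δp : ℝ, (1 - η) * δ0 ≤ δp ∧ δp ≤ (1 + η) * δ0 ∧
            ε / δp + (∑ i : Fin (n + 1),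
              ‖a i.castSucc‖ ^ 2 / (S1 * (1 - lam i.castSucc) + δp)) = 1) ∧
          (∃ δm : ℝ, -(1 + η) * δ0 ≤ δm ∧ δm ≤ -(1 - η) * δ0 ∧
            ε / δm + (∑ i : Fin (n + 1),
              ‖a i.castSucc‖ ^ 2 / (S1 * (1 - lam i.castSucc) + δm)) = 1) := by
  refine ⟨1 / 10, by norm_num, ?_⟩
  intro n lam a hmono hl0 hlt hl1 hsum ε Δ S1 S2 S3 δ0 η hε hε0 hΔ hS1 hS2 hS3 hδ hη hcond
  have hD : 0 < Δ := by rw [hΔ]; linarith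
  have hx : ∀ i : Fin (n + 1), Δ ≤ 1 - lam i.castSucc := fun i => by
    have := hmono (Fin.castSucc_le_castSucc_iff.2 (Fin.le_last i))
    rw [hΔ]; linarith
  have hx0 : ∀ i : Fin (n + 1), 0 < 1 - lam i.castSucc := fun i => hD.trans_le (hx i)
  have p1 : 0 ≤ S1 := by
    rw [hS1]; exact Finset.sum_nonneg fun i _ => div_nonneg (sq_nonneg _) (hx0 i).le
  have p2 : 0 ≤ S2 := by
    rw [hS2]; exact Finset.sum_nonneg fun i _ => div_nonneg (sq_nonneg _) (pow_nonneg (hx0 i).le _)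
  have p3 : 0 ≤ S3 := by
    rw [hS3]; exact Finset.sum_nonneg fun i _ => div_nonneg (sq_nonneg _) (pow_nonneg (hx0 i).le _)
  have hs : 0 < Real.sqrt ε := Real.sqrt_pos.2 hε0
  have c1 : Real.sqrt ε ≤ 1 / 10 * (S1 * S2 / S3) :=
    hcond.trans (mul_le_mul_of_nonneg_left (min_le_left _ _) (by norm_num))
  have c2 : Real.sqrt ε ≤ 1 / 10 * (Δ * Real.sqrt S2) :=
    hcond.trans (mul_le_mul_of_nonneg_left (min_le_right _ _) (by norm_num))
  have h3 : 0 < S3 := p3.lt_of_ne (by rintro rfl; simp at c1; linarith)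
  have h2 : 0 < S2 := p2.lt_of_ne (by rintro rfl; simp at c1; linarith)
  have h1 : 0 < S1 := p1.lt_of_ne (by rintro rfl; simp at c1; linarith)
  have hr : 0 < Real.sqrt S2 := Real.sqrt_pos.2 h2
  have hrr : Real.sqrt S2 ^ 2 = S2 := Real.sq_sqrt p2
  have hss : Real.sqrt ε ^ 2 = ε := Real.sq_sqrt hε0.le
  have hcs : S1 ^ 2 ≤ S2 := by
    have h := Finset.sum_mul_sq_le_sq_mul_sq Finset.univ
      (fun i : Fin (n + 1) => ‖a i.castSucc‖) (fun i => ‖a i.castSucc‖ / (1 - lam i.castSucc))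
    have e1 : ∑ i : Fin (n + 1), ‖a i.castSucc‖ * (‖a i.castSucc‖ / (1 - lam i.castSucc)) = S1 := by
      rw [hS1]; exact Finset.sum_congr rfl fun i _ => by ring
    have e2 : ∑ i : Fin (n + 1), (‖a i.castSucc‖ / (1 - lam i.castSucc)) ^ 2 = S2 := by
      rw [hS2]; exact Finset.sum_congr rfl fun i _ => by rw [div_pow]
    have e3 : ∑ i : Fin (n + 1), ‖a i.castSucc‖ ^ 2 ≤ 1 := by
      rw [Fin.sum_univ_castSucc] at hsum
      linarith
    rw [e1, e2] at h
    nlinarith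
  have hS1r : S1 ≤ Real.sqrt S2 := Real.le_sqrt_of_sq_le hcs
  set r := Real.sqrt S2 with hrdef
  set s := Real.sqrt ε with hsdef
  have hη1 : η ≤ 1 / 10 := by
    rw [hη, div_le_iff₀ (by positivity)]
    have : s * S3 ≤ 1 / 10 * (S1 * S2) := by
      have := mul_le_mul_of_nonneg_right c1 p3
      rwa [mul_assoc, div_mul_cancel₀ _ h3.ne'] at this
    nlinarith
  have hη0 : 0 ≤ η := by rw [hη]; positivity
  have hd0 : 0 ≤ δ0 := by rw [hδ]; positivity
  have hδq : δ0 = s / r * S1 := by rw [hδ]; ring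
  have hεq : ε = (s / r) ^ 2 * S2 := by
    rw [div_pow, hss, hrr, div_mul_cancel₀ _ h2.ne']
  have core := secular_core (fun i : Fin (n + 1) => ‖a i.castSucc‖ ^ 2)
    (fun i => 1 - lam i.castSucc) S1 S2 S3 (s / r) η Δ (fun i => sq_nonneg _) hS1 hS2 hS3 hD hx
    h1 h2 (by positivity) (by rw [div_le_iff₀ hr]; linarith)
    (by rw [hη]; field_simp) hη0 hη1
  rw [← hεq, ← hδq] at core
  obtain ⟨⟨t, t1, t2, ht⟩, ⟨u, u1, u2, hu⟩⟩ := core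
  refine ⟨⟨δ0 * t, by nlinarith, by nlinarith, ht⟩, ⟨δ0 * u, ?_, ?_, hu⟩⟩
  · have := mul_le_mul_of_nonneg_left u1 hd0
    have := mul_nonneg hη0 hd0
    linarith
  · have := mul_le_mul_of_nonneg_left u2 hd0
    linarith
end

section
/- Let A be an n×n complex matrix and Q an n×n orthogonal projection matrix (Q² = Q = Q*) such that A = Q·A·Q, and let w ∈ ℂ^n be a unit vector with P_w = |w⟩⟨w| the orthogonal projection onto its span. Then the operator norm of the commutator satisfies ‖P_w·A − A·P_w‖ ≤ 2·‖A‖·‖Q w‖. -/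
open Matrix BigOperators

/-- Let `A` be an `n×n` complex matrix and `Q` an orthogonal projection
(`Q² = Q = Qᴴ`) with `A = Q·A·Q`, and let `w` be a unit vector with `P_w = |w⟩⟨w|`. Then, in
the operator norm induced by the Euclidean norm,
`‖P_w·A − A·P_w‖ ≤ 2·‖A‖·‖Q w‖`, where `‖Q w‖` is the Euclidean norm of `Q w`. -/
theorem commutator_norm_bound
    (n : ℕ) (A Q : Matrix (Fin n) (Fin n) ℂ)
    (hQidem : Q * Q = Q) (hQherm : Qᴴ = Q)
    (hA : A = Q * A * Q)
    (w : Fin n → ℂ) (hw : star w ⬝ᵥ w = 1)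
    (Pw : Matrix (Fin n) (Fin n) ℂ)
    (hPw : Pw = Matrix.vecMulVec w (star w)) :
    ‖Matrix.toEuclideanCLM (𝕜 := ℂ) (Pw * A - A * Pw)‖ ≤
      2 * ‖Matrix.toEuclideanCLM (𝕜 := ℂ) A‖ *
        ‖(WithLp.equiv 2 (Fin n → ℂ)).symm (Q.mulVec w)‖ := by
  set T := Matrix.toEuclideanCLM (n := Fin n) (𝕜 := ℂ) with hT
  set q := ‖(WithLp.equiv 2 (Fin n → ℂ)).symm (Q.mulVec w)‖ with hq
  have hwn : ‖(WithLp.toLp 2 w : EuclideanSpace ℂ (Fin n))‖ = 1 := by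
    have h1 : inner ℂ (WithLp.toLp 2 w : EuclideanSpace ℂ (Fin n)) (WithLp.toLp 2 w) = 1 := by
      rw [EuclideanSpace.inner_toLp_toLp, dotProduct_comm, hw]
    have h2 : ‖(WithLp.toLp 2 w : EuclideanSpace ℂ (Fin n))‖ ^ 2 = 1 := by
      rw [← inner_self_eq_norm_sq (𝕜 := ℂ), h1]
      simp
    exact (pow_eq_one_iff_of_nonneg (norm_nonneg _) two_ne_zero).1 h2
  have hQP : ‖T (Q * Pw)‖ ≤ q := by
    refine ContinuousLinearMap.opNorm_le_bound _ (norm_nonneg _) fun x => ?_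
    have hx : T (Q * Pw) x = (inner ℂ (WithLp.toLp 2 w : EuclideanSpace ℂ (Fin n)) x) •
        (WithLp.equiv 2 (Fin n → ℂ)).symm (Q.mulVec w) := by
      obtain ⟨x⟩ := x
      rw [hT, Matrix.toEuclideanCLM_toLp, EuclideanSpace.inner_toLp_toLp, hPw,
        Matrix.mul_vecMulVec, Matrix.vecMulVec_mulVec, dotProduct_comm]
      ext i
      simp [mul_comm]
    rw [hx, norm_smul, mul_comm]
    refine mul_le_mul_of_nonneg_left ?_ (norm_nonneg _)
    simpa [hwn] using norm_inner_le_norm (𝕜 := ℂ) (WithLp.toLp 2 w : EuclideanSpace ℂ (Fin n)) x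
  have hPh : Pwᴴ = Pw := by
    rw [hPw, Matrix.conjTranspose_vecMulVec, star_star]
  have hPQ : ‖T (Pw * Q)‖ ≤ q := by
    have : Pw * Q = star (Q * Pw) := by
      rw [Matrix.star_eq_conjTranspose, Matrix.conjTranspose_mul, hQherm, hPh]
    rw [this, map_star, ContinuousLinearMap.star_eq_adjoint]
    exact (LinearIsometryEquiv.norm_map ContinuousLinearMap.adjoint _).trans_le hQP
  have hQA : Q * A = A := by
    rw [hA, ← Matrix.mul_assoc, ← Matrix.mul_assoc, hQidem]
  have hAQ : A * Q = A := by
    rw [hA, Matrix.mul_assoc, hQidem]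
  have e : Pw * A - A * Pw = (Pw * Q) * A - A * (Q * Pw) := by
    rw [Matrix.mul_assoc, hQA, ← Matrix.mul_assoc, hAQ]
  rw [e, map_sub, map_mul, map_mul T A]
  have h1 := norm_mul_le (T (Pw * Q)) (T A)
  have h2 := norm_mul_le (T A) (T (Q * Pw))
  have h3 := mul_le_mul_of_nonneg_right hPQ (norm_nonneg (T A))
  have h4 := mul_le_mul_of_nonneg_left hQP (norm_nonneg (T A))
  have h5 := norm_sub_le (T (Pw * Q) * T A) (T A * T (Q * Pw))
  linarith
end

section
/- Let H be an n×n Hermitian matrix, V a linear subspace of the eigenspace {x : H x = x}, w ∈ ℂ^n a unit vector whose orthogonal projection P_V w onto V is nonzero, and set u = P_V w/‖P_V w‖. Then for every r ∈ ℝ, every v ∈ V and every t ∈ ℝ, ⟨w, exp(−i t H_search) v⟩ = ⟨u, v⟩ · ⟨w, exp(−i t H_search) u⟩, where H_search = r·H + P_w. -/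
open Matrix BigOperators

open scoped ComplexOrder

theorem aux_exp_zero {n : ℕ} (A : Matrix (Fin n) (Fin n) ℂ) (c : ℂ) (w y : Fin n → ℂ)
    (hA : A.mulVec y = c • y) (hwy : star w ⬝ᵥ y = 0) :
    star w ⬝ᵥ (NormedSpace.exp A).mulVec y = 0 := by
  letI : NormedRing (Matrix (Fin n) (Fin n) ℂ) := Matrix.linftyOpNormedRing
  letI : NormedAlgebra ℂ (Matrix (Fin n) (Fin n) ℂ) := Matrix.linftyOpNormedAlgebra
  have hs := NormedSpace.exp_series_hasSum_exp' (𝕂 := ℂ) A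
  let f : Matrix (Fin n) (Fin n) ℂ →ₗ[ℂ] ℂ :=
    { toFun := fun M => star w ⬝ᵥ M.mulVec y
      map_add' := by intro a b; simp [Matrix.add_mulVec]
      map_smul' := by intro a b; simp [Matrix.smul_mulVec] }
  have hf : Continuous f := f.continuous_of_finiteDimensional
  have hk : ∀ k : ℕ, (A ^ k).mulVec y = c ^ k • y := by
    intro k
    induction k with
    | zero => simp
    | succ k ih =>
      rw [pow_succ, ← Matrix.mulVec_mulVec, hA, Matrix.mulVec_smul, ih, smul_smul, pow_succ, mul_comm]
  have h2 := hs.map f hf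
  have h3 : (f ∘ fun k : ℕ => ((Nat.factorial k : ℂ))⁻¹ • A ^ k) = fun _ => 0 := by
    funext k
    have : f (A ^ k) = 0 := by
      change star w ⬝ᵥ (A ^ k).mulVec y = 0
      rw [hk, dotProduct_smul, hwy, smul_zero]
    simp [this]
  rw [h3] at h2
  exact h2.unique hasSum_zero

/-- Let `H` be Hermitian, `V` a subspace of the eigenspace `{x : H x = x}`,
`w` a unit vector whose orthogonal projection `pw` onto `V` (characterized by `pw ∈ V` and
`w − pw ⊥ V`) is nonzero, and `u = pw/‖pw‖`. Then for every `r ∈ ℝ`, every `x ∈ V` and every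
`t ∈ ℝ`, `⟨w, exp(−i t H_search) x⟩ = ⟨u, x⟩·⟨w, exp(−i t H_search) u⟩` where
`H_search = r•H + |w⟩⟨w|`. -/
theorem amplitude_factorization_through_projection
    (n : ℕ) (H : Matrix (Fin n) (Fin n) ℂ) (hH : H.IsHermitian)
    (V : Submodule ℂ (Fin n → ℂ)) (hV : ∀ x ∈ V, H.mulVec x = x)
    (w : Fin n → ℂ) (hw : star w ⬝ᵥ w = 1)
    (pw : Fin n → ℂ) (hpwV : pw ∈ V)
    (hperp : ∀ x ∈ V, star x ⬝ᵥ (w - pw) = 0)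
    (hpw0 : pw ≠ 0)
    (u : Fin n → ℂ)
    (hu : u = ((Real.sqrt ((star pw ⬝ᵥ pw).re) : ℂ))⁻¹ • pw) :
    ∀ (r : ℝ) (x : Fin n → ℂ), x ∈ V → ∀ t : ℝ,
      star w ⬝ᵥ (NormedSpace.exp ((-(Complex.I * (t : ℂ))) •
          ((r : ℂ) • H + Matrix.vecMulVec w (star w)))).mulVec x =
        (star u ⬝ᵥ x) *
          (star w ⬝ᵥ (NormedSpace.exp ((-(Complex.I * (t : ℂ))) •
            ((r : ℂ) • H + Matrix.vecMulVec w (star w)))).mulVec u) := by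
  intro r x hx t
  set E := NormedSpace.exp ((-(Complex.I * (t : ℂ))) •
          ((r : ℂ) • H + Matrix.vecMulVec w (star w))) with hE
  set s : ℝ := Real.sqrt ((star pw ⬝ᵥ pw).re) with hs
  have hnn : 0 ≤ star pw ⬝ᵥ pw := dotProduct_star_self_nonneg pw
  have hne : star pw ⬝ᵥ pw ≠ 0 := fun h => hpw0 (dotProduct_star_self_eq_zero.mp h)
  obtain ⟨hre, him⟩ := Complex.le_def.mp hnn
  have hss : (s : ℂ) * s = star pw ⬝ᵥ pw := by
    rw [← Complex.ofReal_mul, Real.mul_self_sqrt hre]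
    apply Complex.ext
    · simp
    · simpa using him
  have hs0 : (s : ℂ) ≠ 0 := by
    intro h
    rw [h] at hss
    exact hne (by rw [← hss]; simp)
  have hux : star u ⬝ᵥ x = (s : ℂ)⁻¹ * (star pw ⬝ᵥ x) := by
    rw [hu]; simp [star_smul]
  have huV : u ∈ V := by rw [hu]; exact V.smul_mem _ hpwV
  set y := x - (star u ⬝ᵥ x) • u with hy
  have hyV : y ∈ V := V.sub_mem hx (V.smul_mem _ huV)
  have hpy : star pw ⬝ᵥ y = 0 := by
    rw [hy, dotProduct_sub, dotProduct_smul, hux, hu, dotProduct_smul, ← hss]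
    simp only [smul_eq_mul]
    field_simp
    ring
  have hwy : star w ⬝ᵥ y = 0 := by
    have h1 := hperp y hyV
    have h2 := congrArg star h1
    rw [star_dotProduct, star_star, star_zero, star_sub, sub_dotProduct, hpy, sub_zero] at h2
    exact h2
  have key := aux_exp_zero ((-(Complex.I * (t : ℂ))) •
          ((r : ℂ) • H + Matrix.vecMulVec w (star w))) (-(Complex.I * (t : ℂ)) * r) w y (by
    rw [Matrix.smul_mulVec, Matrix.add_mulVec, Matrix.smul_mulVec, hV y hyV,
      Matrix.vecMulVec_mulVec, hwy]
    rw [MulOpposite.op_zero, zero_smul, add_zero, smul_smul]) hwy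
  rw [← hE, hy, Matrix.mulVec_sub, Matrix.mulVec_smul, dotProduct_sub, dotProduct_smul,
    smul_eq_mul] at key
  exact sub_eq_zero.mp key
end
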